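/- arXiv:2511.00820 — 2 statements merged into one kernel-verified Lean document; each statement's English description precedes it below -/
import Mathlib

section
/- Fix constants C_{β₀}, C_u, C_η, c_η, C₁, C₂ > 0 with C_η > c_η, c_η < √((1/2)·min{τ², (1−τ)²}), and C₁ > √(C_u² + E[ε₁²] + C_{β₀}²). Let (β₀*, M_u*, ρ₁*) denote the unique minimizing triple of the asymptotic program and assume M_u* > 0; let M_η* denote the unique optimal value of M_η. Then ρ₁* satisfies the fixed-point equation ρ₁* = √( E[ (M_u* g₁ + ε₁ − β₀* − prox_{ℓ_τ}(M_u* g₁ + ε₁ − β₀*; ρ₁*/M_η*))² ] ), where prox_{ℓ_τ}(x; ρ) = argmin_v ((x − v)²/(2ρ)) + ℓ_τ(v) is the proximal operator of the pinball loss. -/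
open MeasureTheory ProbabilityTheory Filter Finset

noncomputable section

/-- The pinball (quantile) loss `ℓ_τ(r) = τ·r − min{r, 0}`. -/
def pinball (τ r : ℝ) : ℝ := τ * r - min r 0

/-- The Moreau envelope of a scalar function, `e_f(x; ρ) = inf_v (x − v)²/(2ρ) + f(v)` for
`ρ > 0`, continuously extended by `e_f(x; 0) = f(x)`. -/
def moreau (f : ℝ → ℝ) (x ρ : ℝ) : ℝ :=
  if ρ = 0 then f x else ⨅ v : ℝ, ((x - v) ^ 2 / (2 * ρ) + f v)

/-- The convex (Fenchel) conjugate of a scalar function, with values in `EReal`. -/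
def conjE (f : ℝ → ℝ) (x : ℝ) : EReal := ⨆ v : ℝ, ((v * x - f v : ℝ) : EReal)

/-- The Moreau envelope of the convex conjugate `f*` of a scalar function `f`. -/
def moreauConj (f : ℝ → ℝ) (x ρ : ℝ) : ℝ :=
  (⨅ v : ℝ, ((((x - v) ^ 2 / (2 * ρ) : ℝ) : EReal) + conjE f v)).toReal

/-- Assumptions on the noise distribution `P_ε`: mean zero, finite second moment and a bounded,
continuous density that is positive on all of `ℝ` (hence, in particular, continuous). -/
structure NoiseAssumption (Pε : Measure ℝ) : Prop where
  mean_zero : ∫ x, x ∂Pε = 0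
  second_moment : Integrable (fun x => x ^ 2) Pε
  density : ∃ f : ℝ → ℝ, Continuous f ∧ (∀ x, 0 < f x) ∧ (∃ C, ∀ x, f x ≤ C) ∧
    Pε = volume.withDensity fun x => ENNReal.ofReal (f x)

/-- The deterministic asymptotic objective
`A(β₀, M_u, ρ₁, M_η, ρ₂) = E[e_{ℓ_τ}(M_u g₁ + ε₁ − β₀; ρ₁/M_η)] − M_η² M_u γ/(2ρ₂)
  + γ E[e_ν((M_η M_u/ρ₂) h₁ + γ √d β̃₁; M_u/ρ₂)] + M_η ρ₁/2 − M_u ρ₂/2`,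
where `(g₁, ε₁) ∼ N(0,1) ⊗ P_ε` and `(h₁, √d β̃₁) ∼ N(0,1) ⊗ P_β`. -/
def asymObj (τ γ : ℝ) (Pε Pβ : Measure ℝ) (ν : ℝ → ℝ) (β₀ Mu ρ₁ Mη ρ₂ : ℝ) : ℝ :=
  (∫ z, moreau (pinball τ) (Mu * z.1 + z.2 - β₀) (ρ₁ / Mη) ∂((gaussianReal 0 1).prod Pε))
    - Mη ^ 2 * Mu * γ / (2 * ρ₂)
    + γ * (∫ z, moreau ν (Mη * Mu / ρ₂ * z.1 + γ * z.2) (Mu / ρ₂)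
        ∂((gaussianReal 0 1).prod Pβ))
    + Mη * ρ₁ / 2 - Mu * ρ₂ / 2

/-- The inner maximum of the asymptotic objective over `M_η ∈ [c_η, C_η]` and `ρ₂ ∈ (0, C₂]`,
as a function of `(β₀, M_u, ρ₁)`. -/
def asymFmax (τ γ : ℝ) (Pε Pβ : Measure ℝ) (ν : ℝ → ℝ) (cη Cη C₂ : ℝ)
    (p : ℝ × ℝ × ℝ) : ℝ :=
  sSup ((fun q : ℝ × ℝ => asymObj τ γ Pε Pβ ν p.1 p.2.1 p.2.2 q.1 q.2) ''
    (Set.Icc cη Cη ×ˢ Set.Ioc (0 : ℝ) C₂))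

/-- The constraint box `{|β₀| ≤ C_{β₀}} × {0 ≤ M_u ≤ C_u} × {0 ≤ ρ₁ ≤ C₁}` of the outer
minimization of the asymptotic program. -/
def asymBox (Cβ0 Cu C₁ : ℝ) : Set (ℝ × ℝ × ℝ) :=
  Set.Icc (-Cβ0) Cβ0 ×ˢ Set.Icc (0 : ℝ) Cu ×ˢ Set.Icc (0 : ℝ) C₁

/-- Parts (v) and (vi) of the regularizer assumption, stated for the limiting scalar penalty `ν`:
there exist a.e. first and second derivatives `D1, D2` of `x ↦ e_{ν*}(x; ρ)` satisfying the
differentiation-under-the-integral / Stein identities, and the expected second derivative is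
bounded away from zero on compacts. -/
def ConjDerivAssumption (γ : ℝ) (Pβ : Measure ℝ) (ν : ℝ → ℝ) : Prop :=
  ∃ D1 D2 : ℝ → ℝ → ℝ,
    (∀ ρ > (0 : ℝ),
      (∀ᵐ x ∂(volume : Measure ℝ), HasDerivAt (fun t => moreauConj ν t ρ) (D1 x ρ) x) ∧
      (∀ᵐ x ∂(volume : Measure ℝ), HasDerivAt (fun t => D1 t ρ) (D2 x ρ) x) ∧
      (∀ c : ℝ,
        HasDerivAt (fun c' => ∫ z, moreauConj ν (c' * z.1 + ρ * γ * z.2) ρ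
            ∂((gaussianReal 0 1).prod Pβ))
          (∫ z, z.1 * D1 (c * z.1 + ρ * γ * z.2) ρ ∂((gaussianReal 0 1).prod Pβ)) c ∧
        (∫ z, z.1 * D1 (c * z.1 + ρ * γ * z.2) ρ ∂((gaussianReal 0 1).prod Pβ))
          = c * ∫ z, D2 (c * z.1 + ρ * γ * z.2) ρ ∂((gaussianReal 0 1).prod Pβ))) ∧
    (∀ A : Set ℝ, IsCompact A → A ⊆ Set.Ioi 0 → ∀ Cρ > (0 : ℝ), ∃ m > (0 : ℝ),
      ∀ c ∈ A, ∀ ρ ∈ Set.Ioc (0 : ℝ) Cρ,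
        m ≤ ∫ z, D2 (c * z.1 + ρ * γ * z.2) ρ ∂((gaussianReal 0 1).prod Pβ))

/-- The outer function of the `M_η`-maximization:
`G(M_η) = max_{ρ₂ ∈ (0,C₂]} min_{(β₀,M_u,ρ₁) ∈ box} A(β₀, M_u, ρ₁, M_η, ρ₂)`. -/
def asymG (τ γ : ℝ) (Pε Pβ : Measure ℝ) (ν : ℝ → ℝ) (Cβ0 Cu C₁ C₂ : ℝ) (Mη : ℝ) : ℝ :=
  sSup ((fun ρ₂ =>
      sInf ((fun p : ℝ × ℝ × ℝ => asymObj τ γ Pε Pβ ν p.1 p.2.1 p.2.2 Mη ρ₂) ''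
        asymBox Cβ0 Cu C₁)) '' Set.Ioc (0 : ℝ) C₂)

/-- The proximal operator of the pinball loss:
`prox_{ℓ_τ}(x; ρ) = argmin_v (x − v)²/(2ρ) + ℓ_τ(v)`. -/
def proxPinball (τ x ρ : ℝ) : ℝ :=
  if ρ * τ < x then x - ρ * τ else if x < -(ρ * (1 - τ)) then x + ρ * (1 - τ) else 0

/-!
Read `ρ₁*` off a near-saddle point. The Moreau envelope is jointly convex, so the objective is
convex in `(β₀, M_u, ρ₁)`. Since `E[h₁²] = 1`, the correction `M_η² M_u γ / (2 ρ₂)` can be moved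
under the expectation with a factor `h₁²`; the tilted envelope that results is an infimum of affine
functions of `(M_η, ρ₂)`, so the objective is concave in these variables. As `ρ₂` ranges over a
half-open interval there may be no saddle point, but Sion's theorem gives, for every `δ > 0`, some
`ρ₂` at which the minimizing triple is `δ`-optimal against `(M_η*, ρ₂)`. The terms that involve `ρ₁`
do not involve `ρ₂`, so `t* = ρ₁* / M_η*` minimizes `E[e(X; t)] + M_η*² t / 2` exactly, where
`X = M_u* g₁ + ε₁ - β₀*`. The first-order condition is the fixed-point equation, because
`∂ₜ E[e(X; t)] = -E[(X - prox(X; t))²] / (2 t²)`. The minimizer is not the right endpoint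
`C₁ / M_η*`, as `E[(X - prox)²] ≤ E[X²] < C₁²`, and at `t* = 0` both sides of the equation vanish.
-/

section Minimax

variable {E F G : Type*} [TopologicalSpace E] [AddCommGroup E] [Module ℝ E]
  [IsTopologicalAddGroup E] [ContinuousSMul ℝ E] [TopologicalSpace F] [AddCommGroup F]
  [Module ℝ F] [IsTopologicalAddGroup F] [ContinuousSMul ℝ F] [TopologicalSpace G]
  [AddCommGroup G] [Module ℝ G] [IsTopologicalAddGroup G] [ContinuousSMul ℝ G]
  {f : E → F × G → ℝ} {X : Set E} {A : Set F} {B : Set G} {p : E} {a : F}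

theorem sSup_eq_sSup_sInf_of_isMinOn_of_isMaxOn (hX : IsCompact X) (hB : B.Nonempty)
    (hf : ContinuousOn f.uncurry (X ×ˢ (A ×ˢ B)))
    (hcvx : ∀ y ∈ A ×ˢ B, ConvexOn ℝ X fun x => f x y)
    (hccv : ∀ x ∈ X, ConcaveOn ℝ (A ×ˢ B) (f x))
    (hbdd : ∀ x ∈ X, BddAbove (f x '' (A ×ˢ B))) (hp : p ∈ X)
    (hmin : IsMinOn (fun x => sSup (f x '' (A ×ˢ B))) X p) (ha : a ∈ A)
    (hmax : IsMaxOn (fun a => sSup ((fun b => sInf ((fun x => f x (a, b)) '' X)) '' B)) A a) :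
    sSup (f p '' (A ×ˢ B)) = sSup ((fun b => sInf ((fun x => f x (a, b)) '' X)) '' B) := by
  have hfx (x) (hx : x ∈ X) : ContinuousOn (f x) (A ×ˢ B) :=
    hf.comp (f := fun y => (x, y)) (by fun_prop) fun y hy => ⟨hx, hy⟩
  have hfy (y) (hy : y ∈ A ×ˢ B) : ContinuousOn (fun x => f x y) X :=
    hf.comp (f := fun x => (x, y)) (by fun_prop) fun x hx => ⟨hx, hy⟩
  have hlub (x) (hx : x ∈ X) : IsLUB (f x '' (A ×ˢ B)) (sSup (f x '' (A ×ˢ B))) :=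
    isLUB_csSup ((Set.Nonempty.prod ⟨a, ha⟩ hB).image _) (hbdd x hx)
  have hglb (y) (hy : y ∈ A ×ˢ B) :
      IsGLB ((fun x => f x y) '' X) (sInf ((fun x => f x y) '' X)) :=
    isGLB_csInf (Set.Nonempty.image _ ⟨p, hp⟩) (hX.image_of_continuousOn (hfy y hy)).bddBelow
  have hbddInf (a') (ha' : a' ∈ A) :
      BddAbove ((fun b => sInf ((fun x => f x (a', b)) '' X)) '' B) := by
    refine ⟨sSup (f p '' (A ×ˢ B)), Set.forall_mem_image.2 fun b hb => ?_⟩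
    exact ((hglb (a', b) ⟨ha', hb⟩).1 ⟨p, hp, rfl⟩).trans ((hlub p hp).1 ⟨_, ⟨ha', hb⟩, rfl⟩)
  refine Sion.minimax ⟨p, hp⟩ hX (fun y hy => (hfy y hy).lowerSemicontinuousOn)
    (fun y hy => (hcvx y hy).quasiconvexOn) (hccv p hp).1
    (fun x hx => (hfx x hx).upperSemicontinuousOn) (fun x hx => (hccv x hx).quasiconcaveOn)
    (hcvx (a, hB.some) ⟨ha, hB.some_mem⟩).1 _ hlub _ (hmin.isGLB hp) _ hglb _ ⟨?_, ?_⟩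
  · rintro _ ⟨⟨a', b⟩, ⟨ha', hb⟩, rfl⟩
    exact (le_csSup (hbddInf a' ha') ⟨b, hb, rfl⟩).trans (hmax ha')
  · intro c hc
    exact csSup_le (hB.image _) (Set.forall_mem_image.2 fun b hb => hc ⟨(a, b), ⟨ha, hb⟩, rfl⟩)

theorem exists_forall_le_add_of_isMinOn_of_isMaxOn (hX : IsCompact X) (hB : B.Nonempty)
    (hf : ContinuousOn f.uncurry (X ×ˢ (A ×ˢ B)))
    (hcvx : ∀ y ∈ A ×ˢ B, ConvexOn ℝ X fun x => f x y)
    (hccv : ∀ x ∈ X, ConcaveOn ℝ (A ×ˢ B) (f x))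
    (hbdd : ∀ x ∈ X, BddAbove (f x '' (A ×ˢ B))) (hp : p ∈ X)
    (hmin : IsMinOn (fun x => sSup (f x '' (A ×ˢ B))) X p) (ha : a ∈ A)
    (hmax : IsMaxOn (fun a => sSup ((fun b => sInf ((fun x => f x (a, b)) '' X)) '' B)) A a)
    {δ : ℝ} (hδ : 0 < δ) :
    ∃ b ∈ B, ∀ x ∈ X, f p (a, b) ≤ f x (a, b) + δ := by
  have hval := sSup_eq_sSup_sInf_of_isMinOn_of_isMaxOn hX hB hf hcvx hccv hbdd hp hmin ha hmax
  obtain ⟨_, ⟨b, hb, rfl⟩, hlt⟩ := exists_lt_of_lt_csSup (hB.image _)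
    (hval ▸ sub_lt_self (sSup (f p '' (A ×ˢ B))) hδ)
  refine ⟨b, hb, fun x hx => ?_⟩
  have hfab : ContinuousOn (fun x => f x (a, b)) X :=
    hf.comp (f := fun x => (x, (a, b))) (by fun_prop) fun x hx => ⟨hx, ha, hb⟩
  have hle : sInf ((fun x => f x (a, b)) '' X) ≤ f x (a, b) :=
    csInf_le (hX.image_of_continuousOn hfab).bddBelow ⟨x, hx, rfl⟩
  have hge : f p (a, b) ≤ sSup (f p '' (A ×ˢ B)) := le_csSup (hbdd p hp) ⟨(a, b), ⟨ha, hb⟩, rfl⟩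
  linarith

end Minimax

lemma concaveOn_of_isGLB {ι E : Type*} [AddCommGroup E] [Module ℝ E] {s : Set E} {I : Set ι}
    {φ : ι → E → ℝ} {g : E → ℝ} (hs : Convex ℝ s) (hφ : ∀ i ∈ I, ConcaveOn ℝ s (φ i))
    (hg : ∀ x ∈ s, IsGLB ((φ · x) '' I) (g x)) : ConcaveOn ℝ s g := by
  refine ⟨hs, fun x hx y hy a b ha hb hab => (hg _ (hs hx hy ha hb hab)).2 ?_⟩
  rintro _ ⟨i, hi, rfl⟩
  calc a • g x + b • g y ≤ a • φ i x + b • φ i y := by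
        gcongr
        · exact (hg x hx).1 ⟨i, hi, rfl⟩
        · exact (hg y hy).1 ⟨i, hi, rfl⟩
    _ ≤ φ i (a • x + b • y) := (hφ i hi).2 hx hy ha hb hab

section QuadraticOverLinear

/-- The effective domain of the perspective `(u, ρ) ↦ u² / (2ρ)` of the square: at `ρ = 0` the
function is finite only at `u = 0`, where Lean's `0 / 0 = 0` is the correct value. -/
def sqDivDomain : Set (ℝ × ℝ) := {q | 0 ≤ q.2 ∧ (q.2 = 0 → q.1 = 0)}

lemma mem_sqDivDomain_of_pos (u : ℝ) {ρ : ℝ} (hρ : 0 < ρ) : (u, ρ) ∈ sqDivDomain :=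
  ⟨hρ.le, fun h => absurd h hρ.ne'⟩

lemma smul_mem_sqDivDomain {a : ℝ} (ha : 0 ≤ a) {q : ℝ × ℝ} (hq : q ∈ sqDivDomain) :
    a • q ∈ sqDivDomain := by
  refine ⟨mul_nonneg ha hq.1, fun h => ?_⟩
  rcases mul_eq_zero.1 h with h | h
  · simp [h]
  · simp [hq.2 h]

lemma add_mem_sqDivDomain {p q : ℝ × ℝ} (hp : p ∈ sqDivDomain) (hq : q ∈ sqDivDomain) :
    p + q ∈ sqDivDomain := by
  refine ⟨add_nonneg hp.1 hq.1, fun h => ?_⟩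
  obtain ⟨hp0, hq0⟩ := (add_eq_zero_iff_of_nonneg hp.1 hq.1).1 h
  simp [hp.2 hp0, hq.2 hq0]

lemma convex_sqDivDomain : Convex ℝ sqDivDomain := fun _ hp _ hq _ _ ha hb _ =>
  add_mem_sqDivDomain (smul_mem_sqDivDomain ha hp) (smul_mem_sqDivDomain hb hq)

lemma div_mul_sub_eq_sq_div (u ρ : ℝ) :
    u / ρ * u - ρ * (u / ρ) ^ 2 / 2 = u ^ 2 / (2 * ρ) := by
  rcases eq_or_ne ρ 0 with rfl | hρ
  · simp
  · field_simp
    ring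

lemma mul_sub_le_sq_div (s : ℝ) {q : ℝ × ℝ} (hq : q ∈ sqDivDomain) :
    s * q.1 - q.2 * s ^ 2 / 2 ≤ q.1 ^ 2 / (2 * q.2) := by
  have hu : q.2 * (q.1 / q.2) = q.1 := mul_div_cancel_of_imp' hq.2
  have hsq : 0 ≤ q.2 * (q.1 / q.2 - s) ^ 2 := mul_nonneg hq.1 (sq_nonneg _)
  rw [← div_mul_sub_eq_sq_div]
  linear_combination hsq / 2 + (q.1 / q.2 - s) * hu

-- `u² / (2ρ)` is the supremum over `s` of the linear functions `s u - ρ s² / 2`.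
lemma convexOn_sq_div : ConvexOn ℝ sqDivDomain fun q : ℝ × ℝ => q.1 ^ 2 / (2 * q.2) := by
  refine ⟨convex_sqDivDomain, fun p hp q hq a b ha hb _ => ?_⟩
  set w := a • p + b • q
  set s := w.1 / w.2
  calc w.1 ^ 2 / (2 * w.2) = s * w.1 - w.2 * s ^ 2 / 2 := (div_mul_sub_eq_sq_div _ _).symm
    _ = a • (s * p.1 - p.2 * s ^ 2 / 2) + b • (s * q.1 - q.2 * s ^ 2 / 2) := by
        rw [show w.1 = a * p.1 + b * q.1 from rfl, show w.2 = a * p.2 + b * q.2 from rfl,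
          smul_eq_mul, smul_eq_mul]
        ring
    _ ≤ a • (p.1 ^ 2 / (2 * p.2)) + b • (q.1 ^ 2 / (2 * q.2)) := by
        gcongr
        · exact mul_sub_le_sq_div s hp
        · exact mul_sub_le_sq_div s hq

end QuadraticOverLinear

section MoreauEnvelope

variable {f : ℝ → ℝ} (hf : ConvexOn ℝ Set.univ f)

lemma moreau_zero (f : ℝ → ℝ) (x : ℝ) : moreau f x 0 = f x := if_pos rfl

include hf

lemma isGLB_moreau (x : ℝ) {ρ : ℝ} (hρ : 0 ≤ ρ) :
    IsGLB ((fun v => (x - v) ^ 2 / (2 * ρ) + f v) '' {v | (x - v, ρ) ∈ sqDivDomain})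
      (moreau f x ρ) := by
  rcases hρ.eq_or_lt with rfl | hρ
  · have hx : {v | (x - v, (0 : ℝ)) ∈ sqDivDomain} = {x} := by
      ext v
      simp [sqDivDomain, sub_eq_zero, eq_comm]
    simp [hx, moreau_zero]
  · have huniv : {v | (x - v, ρ) ∈ sqDivDomain} = Set.univ :=
      Set.eq_univ_of_forall fun v => mem_sqDivDomain_of_pos _ hρ
    rw [huniv, Set.image_univ, moreau, if_neg hρ.ne']
    have hcont : ContinuousOn f Set.univ := hf.continuousOn isOpen_univ
    obtain ⟨c, c', hcc'⟩ := hf.exists_affine_le_real isClosed_univ hcont.lowerSemicontinuousOn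
    refine isGLB_ciInf ⟨c * x - ρ * c ^ 2 / 2 + c', Set.forall_mem_range.2 fun v => ?_⟩
    linarith [hcc' v (Set.mem_univ v), mul_sub_le_sq_div c (mem_sqDivDomain_of_pos (x - v) hρ)]

lemma moreau_le {x v ρ : ℝ} (hv : (x - v, ρ) ∈ sqDivDomain) :
    moreau f x ρ ≤ (x - v) ^ 2 / (2 * ρ) + f v :=
  (isGLB_moreau hf x hv.1).1 ⟨v, hv, rfl⟩

lemma moreau_le_self (x : ℝ) {ρ : ℝ} (hρ : 0 ≤ ρ) : moreau f x ρ ≤ f x := by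
  simpa using moreau_le hf (x := x) (v := x) ⟨hρ, fun _ => sub_self x⟩

lemma exists_lt_moreau_add (x : ℝ) {ρ δ : ℝ} (hρ : 0 ≤ ρ) (hδ : 0 < δ) :
    ∃ v, (x - v, ρ) ∈ sqDivDomain ∧ (x - v) ^ 2 / (2 * ρ) + f v < moreau f x ρ + δ := by
  obtain ⟨_, ⟨v, hv, rfl⟩, -, hlt⟩ :=
    (isGLB_moreau hf x hρ).exists_between (lt_add_of_pos_right _ hδ)
  exact ⟨v, hv, hlt⟩

theorem convexOn_moreau :
    ConvexOn ℝ (Set.univ ×ˢ Set.Ici 0) fun q : ℝ × ℝ => moreau f q.1 q.2 := by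
  refine ⟨convex_univ.prod (convex_Ici 0), ?_⟩
  rintro ⟨x, ρ⟩ ⟨-, hρ⟩ ⟨y, r⟩ ⟨-, hr⟩ a b ha hb hab
  refine le_of_forall_pos_le_add fun δ hδ => ?_
  obtain ⟨v, hv, hvδ⟩ := exists_lt_moreau_add hf x hρ hδ
  obtain ⟨w, hw, hwδ⟩ := exists_lt_moreau_add hf y hr hδ
  have hcomb : a • (x - v, ρ) + b • (y - w, r)
      = (a * x + b * y - (a * v + b * w), a * ρ + b * r) :=
    Prod.ext (by simp only [Prod.smul_mk, Prod.mk_add_mk, smul_eq_mul]; ring) rfl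
  have hmem := convex_sqDivDomain hv hw ha hb hab
  have hquad := convexOn_sq_div.2 hv hw ha hb hab
  have hfvw := hf.2 (Set.mem_univ v) (Set.mem_univ w) ha hb hab
  rw [hcomb] at hmem hquad
  simp only [smul_eq_mul, Prod.smul_mk, Prod.mk_add_mk] at hquad hfvw ⊢
  calc moreau f (a * x + b * y) (a * ρ + b * r)
      ≤ (a * x + b * y - (a * v + b * w)) ^ 2 / (2 * (a * ρ + b * r)) + f (a * v + b * w) :=
        moreau_le hf hmem
    _ ≤ a * ((x - v) ^ 2 / (2 * ρ) + f v) + b * ((y - w) ^ 2 / (2 * r) + f w) := by linarith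
    _ ≤ a * (moreau f x ρ + δ) + b * (moreau f y r + δ) := by gcongr
    _ = a * moreau f x ρ + b * moreau f y r + δ := by linear_combination δ * hab

end MoreauEnvelope

section TiltedMoreau

/-- The Moreau envelope of `f` at `(m M h / r + w, M / r)` minus the quadratic `m² M h² / (2 r)`,
as a function of `(m, r)`: for `r > 0` it equals
`inf_v m h (w - v) + r (w - v)² / (2 M) + f v`. Both expectations of envelopes in the asymptotic
objective are expectations of such functions. -/
def tiltedMoreau (f : ℝ → ℝ) (h w M : ℝ) (q : ℝ × ℝ) : ℝ :=
  moreau f (q.1 * M / q.2 * h + w) (M / q.2) - q.1 ^ 2 * M / (2 * q.2) * h ^ 2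

lemma mem_sqDivDomain_div_iff {h w v M m r : ℝ} (hr : 0 < r) :
    (m * M / r * h + w - v, M / r) ∈ sqDivDomain ↔ (w - v, M) ∈ sqDivDomain := by
  have hM : 0 ≤ M / r ↔ 0 ≤ M := by rw [le_div_iff₀ hr, zero_mul]
  simp only [sqDivDomain, Set.mem_ofPred_eq, hM, div_eq_zero_iff, hr.ne', or_false]
  refine and_congr_right fun _ => forall_congr' fun hM0 => ?_
  simp [hM0]

lemma sq_div_tilted {h w v M m r : ℝ} (hr : 0 < r) (hv : (w - v, M) ∈ sqDivDomain) :
    (m * M / r * h + w - v) ^ 2 / (2 * (M / r))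
      = m * (h * (w - v)) + r * ((w - v) ^ 2 / (2 * M)) + m ^ 2 * M / (2 * r) * h ^ 2 := by
  rcases eq_or_ne M 0 with rfl | hM
  · simp [show w - v = 0 from hv.2 rfl]
  · field_simp
    ring

variable {f : ℝ → ℝ} (hf : ConvexOn ℝ Set.univ f)
include hf

lemma isGLB_tiltedMoreau (h w : ℝ) {M : ℝ} (hM : 0 ≤ M) {q : ℝ × ℝ} (hq : 0 < q.2) :
    IsGLB ((fun v => q.1 * (h * (w - v)) + q.2 * ((w - v) ^ 2 / (2 * M)) + f v) ''
      {v | (w - v, M) ∈ sqDivDomain}) (tiltedMoreau f h w M q) := by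
  have hglb := isGLB_moreau hf (q.1 * M / q.2 * h + w) (div_nonneg hM hq.le)
  simp only [mem_sqDivDomain_div_iff hq] at hglb
  refine ⟨Set.forall_mem_image.2 fun v hv => ?_, fun c hc =>
    le_sub_iff_add_le.2 (hglb.2 (Set.forall_mem_image.2 fun v hv => ?_))⟩
  · have hle := moreau_le hf ((mem_sqDivDomain_div_iff (m := q.1) (h := h) hq).2 hv)
    rw [sq_div_tilted hq hv] at hle
    exact sub_le_iff_le_add.2 (hle.trans_eq (by ring))
  · rw [sq_div_tilted hq hv, add_right_comm]
    gcongr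
    exact hc ⟨v, hv, rfl⟩

theorem concaveOn_tiltedMoreau (h w : ℝ) {M : ℝ} (hM : 0 ≤ M) :
    ConcaveOn ℝ (Set.univ ×ˢ Set.Ioi 0) (tiltedMoreau f h w M) := by
  have hcvx : Convex ℝ (Set.univ ×ˢ Set.Ioi 0 : Set (ℝ × ℝ)) := convex_univ.prod (convex_Ioi 0)
  refine concaveOn_of_isGLB hcvx (fun v _ => ?_) fun q hq => isGLB_tiltedMoreau hf h w hM hq.2
  refine ⟨hcvx, fun p _ q _ a b _ _ hab => le_of_eq ?_⟩
  simp only [Prod.fst_add, Prod.snd_add, Prod.smul_fst, Prod.smul_snd, smul_eq_mul]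
  linear_combination f v * hab

lemma tiltedMoreau_le (h w : ℝ) {M : ℝ} (hM : 0 ≤ M) {q : ℝ × ℝ} (hq : 0 < q.2) :
    tiltedMoreau f h w M q ≤ f w := by
  simpa using (isGLB_tiltedMoreau hf h w hM hq).1 ⟨w, by simp [sqDivDomain, hM], rfl⟩

theorem concaveOn_moreau_div (x : ℝ) {r : ℝ} (hr : 0 ≤ r) :
    ConcaveOn ℝ (Set.Ioi 0) fun m => moreau f x (r / m) := by
  simpa [tiltedMoreau, Function.comp_def] using
    (concaveOn_tiltedMoreau hf 0 x hr).comp_linearMap (LinearMap.inr ℝ ℝ ℝ)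

end TiltedMoreau

section Pinball

lemma convexOn_pinball (τ : ℝ) : ConvexOn ℝ Set.univ (pinball τ) :=
  ((LinearMap.mulLeft ℝ τ).convexOn convex_univ).sub
    ((concaveOn_id convex_univ).inf (concaveOn_const 0 convex_univ))

lemma mul_le_pinball {τ s : ℝ} (hs : s ∈ Set.Icc (τ - 1) τ) (x : ℝ) : s * x ≤ pinball τ x := by
  obtain ⟨hs₁, hs₂⟩ := hs
  rcases le_total x 0 with hx | hx
  · rw [pinball, min_eq_left hx]
    nlinarith
  · rw [pinball, min_eq_right hx]
    nlinarith

/-- The derivative of `x ↦ e_{ℓ_τ}(x; ρ)` for `ρ > 0`: the number `x / ρ` clipped to the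
subdifferential `[τ - 1, τ]` of the pinball loss at `0`. -/
def pinballScore (τ x ρ : ℝ) : ℝ := max (τ - 1) (min (x / ρ) τ)

lemma pinballScore_mem_Icc (τ x ρ : ℝ) : pinballScore τ x ρ ∈ Set.Icc (τ - 1) τ :=
  ⟨le_max_left _ _, max_le (by linarith) (min_le_right _ _)⟩

lemma abs_le_one_of_mem_Icc {τ s : ℝ} (hτ : τ ∈ Set.Icc (0 : ℝ) 1) (hs : s ∈ Set.Icc (τ - 1) τ) :
    |s| ≤ 1 :=
  abs_le.2 ⟨by linarith [hs.1, hτ.1], by linarith [hs.2, hτ.2]⟩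

lemma sub_proxPinball (τ x : ℝ) {ρ : ℝ} (hρ : 0 < ρ) :
    x - proxPinball τ x ρ = ρ * pinballScore τ x ρ := by
  unfold proxPinball pinballScore
  split_ifs with h₁ h₂
  · rw [min_eq_right (by rw [le_div_iff₀ hρ]; linarith), max_eq_right (by linarith)]
    ring
  · rw [max_eq_left ((min_le_left _ _).trans (by rw [div_le_iff₀ hρ]; linarith))]
    ring
  · rw [min_eq_left (by rw [div_le_iff₀ hρ]; linarith),
      max_eq_right (by rw [le_div_iff₀ hρ]; linarith), mul_div_cancel₀ x hρ.ne', sub_zero]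

lemma abs_sub_proxPinball_le {τ : ℝ} (hτ : τ ∈ Set.Icc (0 : ℝ) 1) (x : ℝ) {ρ : ℝ} (hρ : 0 ≤ ρ) :
    |x - proxPinball τ x ρ| ≤ |x| := by
  have hτρ := mul_nonneg hρ hτ.1
  have hτρ' := mul_nonneg hρ (sub_nonneg.2 hτ.2)
  unfold proxPinball
  split_ifs with h₁ h₂
  · rw [sub_sub_cancel, abs_of_nonneg hτρ]
    exact h₁.le.trans (le_abs_self x)
  · rw [sub_add_cancel_left, abs_neg, abs_of_nonneg hτρ']
    exact (lt_neg_of_lt_neg h₂).le.trans (neg_le_abs x)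
  · rw [sub_zero]

lemma pinball_proxPinball (τ x : ℝ) {ρ : ℝ} (hρ : 0 < ρ) :
    pinball τ (proxPinball τ x ρ) = pinballScore τ x ρ * proxPinball τ x ρ := by
  have hscore : pinballScore τ x ρ = (x - proxPinball τ x ρ) / ρ := by
    rw [sub_proxPinball τ x hρ, mul_div_cancel_left₀ _ hρ.ne']
  rw [hscore]
  unfold proxPinball
  split_ifs with h₁ h₂
  · rw [pinball, min_eq_right (by linarith)]
    field_simp
    ring
  · rw [pinball, min_eq_left (by linarith)]
    field_simp
    ring
  · simp [pinball]

lemma mul_sub_le_moreau_pinball {τ s : ℝ} (hs : s ∈ Set.Icc (τ - 1) τ) (x : ℝ) {ρ : ℝ}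
    (hρ : 0 ≤ ρ) : s * x - ρ * s ^ 2 / 2 ≤ moreau (pinball τ) x ρ := by
  refine (isGLB_moreau (convexOn_pinball τ) x hρ).2 (Set.forall_mem_image.2 fun v hv => ?_)
  linarith [mul_sub_le_sq_div s hv, mul_le_pinball hs v]

lemma moreau_pinball_eq (τ x : ℝ) {ρ : ℝ} (hρ : 0 < ρ) :
    moreau (pinball τ) x ρ = pinballScore τ x ρ * x - ρ * pinballScore τ x ρ ^ 2 / 2 := by
  refine le_antisymm ?_ (mul_sub_le_moreau_pinball (pinballScore_mem_Icc τ x ρ) x hρ.le)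
  have hle := moreau_le (convexOn_pinball τ)
    (mem_sqDivDomain_of_pos (x - proxPinball τ x ρ) hρ)
  have hprox : proxPinball τ x ρ = x - ρ * pinballScore τ x ρ := by
    rw [← sub_proxPinball τ x hρ, sub_sub_cancel]
  rw [pinball_proxPinball τ x hρ, hprox, sub_sub_cancel] at hle
  refine hle.trans_eq ?_
  field_simp
  ring

lemma exists_moreau_pinball_eq (τ x : ℝ) {ρ : ℝ} (hρ : 0 ≤ ρ) :
    ∃ s ∈ Set.Icc (τ - 1) τ, moreau (pinball τ) x ρ = s * x - ρ * s ^ 2 / 2 := by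
  rcases hρ.eq_or_lt with rfl | hρ
  · rw [moreau_zero, pinball]
    rcases le_total x 0 with hx | hx
    · exact ⟨τ - 1, ⟨le_rfl, by linarith⟩, by rw [min_eq_left hx]; ring⟩
    · exact ⟨τ, ⟨by linarith, le_rfl⟩, by rw [min_eq_right hx]; ring⟩
  · exact ⟨_, pinballScore_mem_Icc τ x ρ, moreau_pinball_eq τ x hρ⟩

lemma moreau_pinball_add_le (τ x : ℝ) {ρ r : ℝ} (hρ : 0 ≤ ρ) (hr : 0 < r) :
    moreau (pinball τ) x r + (r - ρ) / 2 * pinballScore τ x r ^ 2 ≤ moreau (pinball τ) x ρ := by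
  rw [moreau_pinball_eq τ x hr]
  linarith [mul_sub_le_moreau_pinball (pinballScore_mem_Icc τ x r) x hρ]

lemma moreau_pinball_sub_le {τ : ℝ} (hτ : τ ∈ Set.Icc (0 : ℝ) 1) (x y : ℝ) {ρ r : ℝ}
    (hρ : 0 ≤ ρ) (hr : 0 ≤ r) :
    moreau (pinball τ) x ρ - moreau (pinball τ) y r ≤ |x - y| + |ρ - r| := by
  obtain ⟨s, hs, hx⟩ := exists_moreau_pinball_eq τ x hρ
  have hy := mul_sub_le_moreau_pinball hs y hr
  have hs₁ := abs_le_one_of_mem_Icc hτ hs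
  have hs₂ : s ^ 2 ≤ 1 := (sq_le_one_iff_abs_le_one s).2 hs₁
  calc moreau (pinball τ) x ρ - moreau (pinball τ) y r
      ≤ s * (x - y) + (r - ρ) * (s ^ 2 / 2) := by linarith
    _ ≤ |s * (x - y)| + |r - ρ| * (s ^ 2 / 2) := by gcongr <;> exact le_abs_self _
    _ = |s| * |x - y| + |r - ρ| * (s ^ 2 / 2) := by rw [abs_mul]
    _ ≤ 1 * |x - y| + |r - ρ| * 1 := by gcongr; linarith
    _ = |x - y| + |ρ - r| := by rw [one_mul, mul_one, abs_sub_comm r ρ]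

lemma abs_moreau_pinball_sub_le {τ : ℝ} (hτ : τ ∈ Set.Icc (0 : ℝ) 1) (x y : ℝ) {ρ r : ℝ}
    (hρ : 0 ≤ ρ) (hr : 0 ≤ r) :
    |moreau (pinball τ) x ρ - moreau (pinball τ) y r| ≤ |x - y| + |ρ - r| := by
  refine abs_sub_le_iff.2 ⟨moreau_pinball_sub_le hτ x y hρ hr, ?_⟩
  rw [abs_sub_comm x, abs_sub_comm ρ]
  exact moreau_pinball_sub_le hτ y x hr hρ

end Pinball

section Expectation

variable {Ω : Type*} [MeasurableSpace Ω] {μ : Measure Ω} {τ : ℝ} {X Y : Ω → ℝ}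

lemma continuous_moreau_pinball (hτ : τ ∈ Set.Icc (0 : ℝ) 1) {ρ : ℝ} (hρ : 0 ≤ ρ) :
    Continuous fun x => moreau (pinball τ) x ρ := by
  refine (LipschitzWith.of_dist_le_mul (K := 1) fun x y => ?_).continuous
  simpa [Real.dist_eq] using abs_moreau_pinball_sub_le hτ x y hρ hρ

lemma integrable_moreau_pinball [IsFiniteMeasure μ] (hτ : τ ∈ Set.Icc (0 : ℝ) 1)
    (hX : Integrable X μ) {ρ : ℝ} (hρ : 0 ≤ ρ) :
    Integrable (fun ω => moreau (pinball τ) (X ω) ρ) μ := by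
  refine (hX.abs.add (integrable_const |ρ|)).mono'
    ((continuous_moreau_pinball hτ hρ).comp_aestronglyMeasurable hX.1) (ae_of_all _ fun ω => ?_)
  simpa [moreau_zero, pinball] using abs_moreau_pinball_sub_le hτ (X ω) 0 hρ le_rfl

lemma abs_integral_moreau_pinball_sub_le [IsProbabilityMeasure μ] (hτ : τ ∈ Set.Icc (0 : ℝ) 1)
    (hX : Integrable X μ) (hY : Integrable Y μ) {ρ r : ℝ} (hρ : 0 ≤ ρ) (hr : 0 ≤ r) :
    |(∫ ω, moreau (pinball τ) (X ω) ρ ∂μ) - ∫ ω, moreau (pinball τ) (Y ω) r ∂μ|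
      ≤ (∫ ω, |X ω - Y ω| ∂μ) + |ρ - r| := by
  have hXρ := integrable_moreau_pinball hτ hX hρ
  have hYr := integrable_moreau_pinball hτ hY hr
  have hXY : Integrable (fun ω => |X ω - Y ω|) μ := (hX.sub hY).abs
  rw [← integral_sub hXρ hYr]
  calc |∫ ω, (moreau (pinball τ) (X ω) ρ - moreau (pinball τ) (Y ω) r) ∂μ|
      ≤ ∫ ω, |moreau (pinball τ) (X ω) ρ - moreau (pinball τ) (Y ω) r| ∂μ :=
        abs_integral_le_integral_abs
    _ ≤ ∫ ω, (|X ω - Y ω| + |ρ - r|) ∂μ :=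
        integral_mono (hXρ.sub hYr).abs (hXY.add (integrable_const _)) fun ω =>
          abs_moreau_pinball_sub_le hτ (X ω) (Y ω) hρ hr
    _ = (∫ ω, |X ω - Y ω| ∂μ) + |ρ - r| := by
        rw [integral_add hXY (integrable_const _)]
        simp

lemma pinballScore_sq_le_one (hτ : τ ∈ Set.Icc (0 : ℝ) 1) (x ρ : ℝ) :
    pinballScore τ x ρ ^ 2 ≤ 1 :=
  (sq_le_one_iff_abs_le_one _).2 (abs_le_one_of_mem_Icc hτ (pinballScore_mem_Icc τ x ρ))

lemma aestronglyMeasurable_pinballScore_sq (τ : ℝ) (hX : AEStronglyMeasurable X μ) (ρ : ℝ) :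
    AEStronglyMeasurable (fun ω => pinballScore τ (X ω) ρ ^ 2) μ := by
  have hcont : Continuous fun x => pinballScore τ x ρ ^ 2 := by
    unfold pinballScore
    fun_prop
  exact hcont.comp_aestronglyMeasurable hX

lemma integrable_pinballScore_sq [IsFiniteMeasure μ] (hτ : τ ∈ Set.Icc (0 : ℝ) 1)
    (hX : AEStronglyMeasurable X μ) (ρ : ℝ) :
    Integrable (fun ω => pinballScore τ (X ω) ρ ^ 2) μ := by
  refine (integrable_const (1 : ℝ)).mono' (aestronglyMeasurable_pinballScore_sq τ hX ρ)
    (ae_of_all _ fun ω => ?_)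
  rw [Real.norm_of_nonneg (sq_nonneg _)]
  exact pinballScore_sq_le_one hτ _ _

lemma continuousAt_integral_pinballScore_sq [IsFiniteMeasure μ] (hτ : τ ∈ Set.Icc (0 : ℝ) 1)
    (hX : AEStronglyMeasurable X μ) {ρ : ℝ} (hρ : 0 < ρ) :
    ContinuousAt (fun r => ∫ ω, pinballScore τ (X ω) r ^ 2 ∂μ) ρ := by
  refine continuousAt_of_dominated
    (Eventually.of_forall fun r => aestronglyMeasurable_pinballScore_sq τ hX r)
    (Eventually.of_forall fun r => ae_of_all _ fun ω => ?_) (integrable_const (1 : ℝ))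
    (ae_of_all _ fun ω => ?_)
  · rw [Real.norm_of_nonneg (sq_nonneg _)]
    exact pinballScore_sq_le_one hτ _ _
  · unfold pinballScore
    fun_prop (disch := exact hρ.ne')

lemma integral_moreau_pinball_add_le [IsFiniteMeasure μ] (hτ : τ ∈ Set.Icc (0 : ℝ) 1)
    (hX : Integrable X μ) {ρ r : ℝ} (hρ : 0 ≤ ρ) (hr : 0 < r) :
    (∫ ω, moreau (pinball τ) (X ω) r ∂μ) + (r - ρ) / 2 * ∫ ω, pinballScore τ (X ω) r ^ 2 ∂μ
      ≤ ∫ ω, moreau (pinball τ) (X ω) ρ ∂μ := by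
  have hXr := integrable_moreau_pinball hτ hX hr.le
  have hscore := (integrable_pinballScore_sq hτ hX.1 r).const_mul ((r - ρ) / 2)
  rw [← integral_const_mul, ← integral_add hXr hscore]
  exact integral_mono (hXr.add hscore) (integrable_moreau_pinball hτ hX hρ) fun ω =>
    moreau_pinball_add_le τ (X ω) hρ hr

lemma proxPinball_zero (τ x : ℝ) : proxPinball τ x 0 = x := by
  rcases lt_trichotomy x 0 with hx | rfl | hx <;> simp [proxPinball, *]

lemma integral_sub_proxPinball_sq (τ : ℝ) (X : Ω → ℝ) {ρ : ℝ} (hρ : 0 < ρ) :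
    ∫ ω, (X ω - proxPinball τ (X ω) ρ) ^ 2 ∂μ
      = ρ ^ 2 * ∫ ω, pinballScore τ (X ω) ρ ^ 2 ∂μ := by
  simp_rw [sub_proxPinball τ _ hρ, mul_pow]
  exact integral_const_mul _ _

lemma integral_sub_proxPinball_sq_le (hτ : τ ∈ Set.Icc (0 : ℝ) 1)
    (hX : Integrable (fun ω => X ω ^ 2) μ) {ρ : ℝ} (hρ : 0 ≤ ρ) :
    ∫ ω, (X ω - proxPinball τ (X ω) ρ) ^ 2 ∂μ ≤ ∫ ω, X ω ^ 2 ∂μ :=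
  integral_mono_of_nonneg (ae_of_all _ fun _ => sq_nonneg _) hX
    (ae_of_all _ fun ω => sq_le_sq.2 (abs_sub_proxPinball_le hτ (X ω) hρ))

lemma le_integral_pinballScore_sq_of_isMinOn [IsFiniteMeasure μ] (hτ : τ ∈ Set.Icc (0 : ℝ) 1)
    (hX : Integrable X μ) {κ t : ℝ} (ht : 0 < t)
    (hmin : IsMinOn (fun ρ => (∫ ω, moreau (pinball τ) (X ω) ρ ∂μ) + κ * ρ / 2)
      (Set.Icc 0 t) t) :
    κ ≤ ∫ ω, pinballScore τ (X ω) t ^ 2 ∂μ := by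
  have hlim := (continuousAt_integral_pinballScore_sq hτ hX.1 ht).continuousWithinAt
    (s := Set.Iio t)
  refine ge_of_tendsto hlim ?_
  filter_upwards [Ioo_mem_nhdsLT ht] with r hr
  have hle := integral_moreau_pinball_add_le hτ hX ht.le hr.1
  have hopt : _ + κ * t / 2 ≤ _ + κ * r / 2 := hmin (Set.Ioo_subset_Icc_self hr)
  have htr : 0 < (t - r) / 2 := half_pos (sub_pos.2 hr.2)
  refine le_of_mul_le_mul_left ?_ htr
  linarith

lemma integral_pinballScore_sq_le_of_isMinOn [IsFiniteMeasure μ] (hτ : τ ∈ Set.Icc (0 : ℝ) 1)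
    (hX : Integrable X μ) {κ t T : ℝ} (ht : 0 < t) (htT : t < T)
    (hmin : IsMinOn (fun ρ => (∫ ω, moreau (pinball τ) (X ω) ρ ∂μ) + κ * ρ / 2)
      (Set.Icc t T) t) :
    ∫ ω, pinballScore τ (X ω) t ^ 2 ∂μ ≤ κ := by
  have hlim := (continuousAt_integral_pinballScore_sq hτ hX.1 ht).continuousWithinAt
    (s := Set.Ioi t)
  refine le_of_tendsto hlim ?_
  filter_upwards [Ioo_mem_nhdsGT htT] with r hr
  have hle := integral_moreau_pinball_add_le hτ hX ht.le (ht.trans hr.1)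
  have hopt : _ + κ * t / 2 ≤ _ + κ * r / 2 := hmin (Set.Ioo_subset_Icc_self hr)
  have hrt : 0 < (r - t) / 2 := half_pos (sub_pos.2 hr.1)
  refine le_of_mul_le_mul_left ?_ hrt
  linarith

theorem integral_sub_proxPinball_sq_eq_of_isMinOn [IsFiniteMeasure μ]
    (hτ : τ ∈ Set.Icc (0 : ℝ) 1) (hX : MemLp X 2 μ) {κ t T : ℝ} (ht : t ∈ Set.Icc 0 T)
    (hmin : IsMinOn (fun ρ => (∫ ω, moreau (pinball τ) (X ω) ρ ∂μ) + κ * ρ / 2)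
      (Set.Icc 0 T) t)
    (hT : ∫ ω, X ω ^ 2 ∂μ < κ * T ^ 2) :
    ∫ ω, (X ω - proxPinball τ (X ω) t) ^ 2 ∂μ = κ * t ^ 2 := by
  have hX₁ : Integrable X μ := hX.integrable one_le_two
  rcases ht.1.eq_or_lt with rfl | ht₀
  · simp [proxPinball_zero]
  have hge : κ ≤ ∫ ω, pinballScore τ (X ω) t ^ 2 ∂μ :=
    le_integral_pinballScore_sq_of_isMinOn hτ hX₁ ht₀
      (hmin.on_subset (Set.Icc_subset_Icc_right ht.2))
  have htT : t < T := by
    refine ht.2.lt_of_ne fun htT => hT.not_ge ?_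
    calc κ * T ^ 2 = t ^ 2 * κ := by rw [htT, mul_comm]
      _ ≤ t ^ 2 * ∫ ω, pinballScore τ (X ω) t ^ 2 ∂μ := by gcongr
      _ = ∫ ω, (X ω - proxPinball τ (X ω) t) ^ 2 ∂μ := (integral_sub_proxPinball_sq τ X ht₀).symm
      _ ≤ ∫ ω, X ω ^ 2 ∂μ := integral_sub_proxPinball_sq_le hτ hX.integrable_sq ht₀.le
  have hle : ∫ ω, pinballScore τ (X ω) t ^ 2 ∂μ ≤ κ :=
    integral_pinballScore_sq_le_of_isMinOn hτ hX₁ ht₀ htT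
      (hmin.on_subset (Set.Icc_subset_Icc_left ht.1))
  rw [integral_sub_proxPinball_sq τ X ht₀, hle.antisymm hge, mul_comm]

end Expectation

section SecondMoment

variable {P Q : Measure ℝ} [IsProbabilityMeasure P] [IsProbabilityMeasure Q]

lemma memLp_mul_fst_add_snd_sub (hP : MemLp id 2 P) (hQ : MemLp id 2 Q) (M b : ℝ) :
    MemLp (fun z : ℝ × ℝ => M * z.1 + z.2 - b) 2 (P.prod Q) :=
  (((hP.comp_fst Q).const_mul M).add (hQ.comp_snd P)).sub (memLp_const b)

lemma integral_mul_fst_add_snd_sub (hP : MemLp id 2 P) (hQ : MemLp id 2 Q)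
    (hP₀ : ∫ x, x ∂P = 0) (hQ₀ : ∫ x, x ∂Q = 0) (M b : ℝ) :
    ∫ z, (M * z.1 + z.2 - b) ∂(P.prod Q) = -b := by
  have hfst : Integrable (fun z : ℝ × ℝ => M * z.1) (P.prod Q) :=
    ((hP.comp_fst Q).integrable one_le_two).const_mul M
  have hsnd : Integrable (fun z : ℝ × ℝ => z.2) (P.prod Q) :=
    (hQ.comp_snd P).integrable one_le_two
  have hadd : Integrable (fun z : ℝ × ℝ => M * z.1 + z.2) (P.prod Q) := hfst.add hsnd
  rw [integral_sub hadd (integrable_const b), integral_add hfst hsnd,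
    integral_const_mul, integral_fun_fst fun x => x, integral_fun_snd fun x => x, hP₀, hQ₀]
  simp

lemma variance_mul_fst_add_snd_sub (hP : MemLp id 2 P) (hQ : MemLp id 2 Q)
    (hP₀ : ∫ x, x ∂P = 0) (hQ₀ : ∫ x, x ∂Q = 0) (M b : ℝ) :
    variance (fun z : ℝ × ℝ => M * z.1 + z.2 - b) (P.prod Q)
      = M ^ 2 * (∫ x, x ^ 2 ∂P) + ∫ x, x ^ 2 ∂Q := by
  rw [variance_sub_const (by fun_prop),
    variance_add_prod (X := fun x => M * x) (Y := fun x => x) (hP.const_mul M) hQ,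
    variance_const_mul, variance_of_integral_eq_zero aemeasurable_id' hP₀,
    variance_of_integral_eq_zero aemeasurable_id' hQ₀]

lemma integral_mul_fst_add_snd_sub_sq (hP : MemLp id 2 P) (hQ : MemLp id 2 Q)
    (hP₀ : ∫ x, x ∂P = 0) (hQ₀ : ∫ x, x ∂Q = 0) (M b : ℝ) :
    ∫ z, (M * z.1 + z.2 - b) ^ 2 ∂(P.prod Q)
      = M ^ 2 * (∫ x, x ^ 2 ∂P) + (∫ x, x ^ 2 ∂Q) + b ^ 2 := by
  have hvar := variance_eq_sub (memLp_mul_fst_add_snd_sub hP hQ M b)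
  rw [variance_mul_fst_add_snd_sub hP hQ hP₀ hQ₀, integral_mul_fst_add_snd_sub hP hQ hP₀ hQ₀,
    neg_sq, eq_sub_iff_add_eq] at hvar
  exact hvar.symm

end SecondMoment

section ExpectedLoss

/-- The loss term `E[e_{ℓ_τ}(M g + ε − b; ρ)]` of the asymptotic objective at `p = (b, M, ρ)`, for
a general joint law `P` of `(g, ε)`. -/
def expectedLoss (τ : ℝ) (P : Measure (ℝ × ℝ)) (p : ℝ × ℝ × ℝ) : ℝ :=
  ∫ z, moreau (pinball τ) (p.2.1 * z.1 + z.2 - p.1) p.2.2 ∂P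

variable {P : Measure (ℝ × ℝ)} [IsProbabilityMeasure P] {τ : ℝ} (hτ : τ ∈ Set.Icc (0 : ℝ) 1)
  (hfst : Integrable Prod.fst P) (hsnd : Integrable Prod.snd P)

include hfst hsnd in
lemma integrable_mul_fst_add_snd_sub (M b : ℝ) :
    Integrable (fun z : ℝ × ℝ => M * z.1 + z.2 - b) P :=
  ((hfst.const_mul M).add hsnd).sub (integrable_const b)

include hτ hfst hsnd

lemma abs_expectedLoss_sub_le {p q : ℝ × ℝ × ℝ} (hp : 0 ≤ p.2.2) (hq : 0 ≤ q.2.2) :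
    |expectedLoss τ P p - expectedLoss τ P q|
      ≤ |p.2.1 - q.2.1| * (∫ z, |z.1| ∂P) + |p.1 - q.1| + |p.2.2 - q.2.2| := by
  have hint := integrable_mul_fst_add_snd_sub hfst hsnd
  have hfst' := hfst.abs.const_mul |p.2.1 - q.2.1|
  refine (abs_integral_moreau_pinball_sub_le hτ (hint p.2.1 p.1) (hint q.2.1 q.1) hp hq).trans
    (add_le_add_left ?_ _)
  calc ∫ z, |p.2.1 * z.1 + z.2 - p.1 - (q.2.1 * z.1 + z.2 - q.1)| ∂P
      ≤ ∫ z, (|p.2.1 - q.2.1| * |z.1| + |p.1 - q.1|) ∂P := by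
        refine integral_mono ((hint _ _).sub (hint _ _)).abs
          (hfst'.add (integrable_const _)) fun z => ?_
        rw [← abs_mul]
        refine (abs_sub _ _).trans_eq' ?_
        congr 1
        ring
    _ = |p.2.1 - q.2.1| * (∫ z, |z.1| ∂P) + |p.1 - q.1| := by
        rw [integral_add hfst' (integrable_const _), integral_const_mul]
        simp

lemma continuousOn_expectedLoss :
    ContinuousOn (expectedLoss τ P) (Set.univ ×ˢ Set.univ ×ˢ Set.Ici 0) := by
  intro q hq
  have hbound : Tendsto (fun p : ℝ × ℝ × ℝ => |p.2.1 - q.2.1| * (∫ z, |z.1| ∂P)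
      + |p.1 - q.1| + |p.2.2 - q.2.2|) (nhds q) (nhds 0) :=
    (by fun_prop : Continuous _).tendsto' _ _ (by simp)
  refine tendsto_iff_dist_tendsto_zero.2 (squeeze_zero' (Eventually.of_forall fun _ => dist_nonneg)
    ?_ (hbound.mono_left nhdsWithin_le_nhds))
  filter_upwards [self_mem_nhdsWithin] with p hp
  exact abs_expectedLoss_sub_le hτ hfst hsnd hp.2.2 hq.2.2

lemma convexOn_expectedLoss :
    ConvexOn ℝ (Set.univ ×ˢ Set.univ ×ˢ Set.Ici 0) (expectedLoss τ P) := by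
  have hconv : Convex ℝ (Set.univ ×ˢ Set.univ ×ˢ Set.Ici 0 : Set (ℝ × ℝ × ℝ)) :=
    convex_univ.prod (convex_univ.prod (convex_Ici 0))
  refine integral_convexOn_of_integrand_ae hconv
    (ae_of_all _ fun z => ⟨hconv, fun p hp q hq a b ha hb hab => ?_⟩) fun p hp =>
    integrable_moreau_pinball hτ (integrable_mul_fst_add_snd_sub hfst hsnd _ _) hp.2.2
  have hle := (convexOn_moreau (convexOn_pinball τ)).2
    (x := (p.2.1 * z.1 + z.2 - p.1, p.2.2)) (y := (q.2.1 * z.1 + z.2 - q.1, q.2.2))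
    ⟨trivial, hp.2.2⟩ ⟨trivial, hq.2.2⟩ ha hb hab
  simp only [Prod.fst_add, Prod.snd_add, Prod.smul_fst, Prod.smul_snd, smul_eq_mul] at hle ⊢
  convert hle using 2
  linear_combination -z.2 * hab

lemma convexOn_expectedLoss_div {m : ℝ} (hm : 0 < m) :
    ConvexOn ℝ (Set.univ ×ˢ Set.univ ×ˢ Set.Ici 0) fun p : ℝ × ℝ × ℝ =>
      expectedLoss τ P (p.1, p.2.1, p.2.2 / m) := by
  have hcomp := (convexOn_expectedLoss hτ hfst hsnd).comp_linearMap
    (LinearMap.id.prodMap (LinearMap.id.prodMap (m⁻¹ • LinearMap.id)))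
  simp only [div_eq_inv_mul]
  exact hcomp.subset (fun p hp => ⟨trivial, trivial, mul_nonneg (inv_nonneg.2 hm.le) hp.2.2⟩)
    (convex_univ.prod (convex_univ.prod (convex_Ici 0)))

lemma concaveOn_expectedLoss_div (b M : ℝ) {ρ : ℝ} (hρ : 0 ≤ ρ) :
    ConcaveOn ℝ (Set.Ioi 0) fun m => expectedLoss τ P (b, M, ρ / m) :=
  integral_concaveOn_of_integrand_ae
    (f := fun (z : ℝ × ℝ) m => moreau (pinball τ) (M * z.1 + z.2 - b) (ρ / m)) (convex_Ioi 0)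
    (ae_of_all _ fun _ => concaveOn_moreau_div (convexOn_pinball τ) _ hρ) fun _ hm =>
    integrable_moreau_pinball hτ (integrable_mul_fst_add_snd_sub hfst hsnd M b)
      (div_nonneg hρ (le_of_lt hm))

lemma expectedLoss_le (b M : ℝ) {ρ : ℝ} (hρ : 0 ≤ ρ) :
    expectedLoss τ P (b, M, ρ) ≤ expectedLoss τ P (b, M, 0) := by
  have hX := integrable_mul_fst_add_snd_sub hfst hsnd M b
  refine integral_mono (integrable_moreau_pinball hτ hX hρ)
    (integrable_moreau_pinball hτ hX le_rfl) fun z => ?_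
  simpa only [moreau_zero] using moreau_le_self (convexOn_pinball τ) _ hρ

end ExpectedLoss

section ExpectedPenalty

/-- The penalty terms `E[e_ν((m M / r) h + γ β; M / r)] − m² M / (2r)` of the asymptotic objective
at `q = (m, r)`, for a general joint law `P` of `(h, β)` with `E[h²] = 1`; the deterministic
correction is kept under the expectation as `m² M / (2r) · h²`. -/
def expectedPenalty (γ : ℝ) (P : Measure (ℝ × ℝ)) (ν : ℝ → ℝ) (M : ℝ) (q : ℝ × ℝ) : ℝ :=
  ∫ z, tiltedMoreau ν z.1 (γ * z.2) M q ∂P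

variable {P : Measure (ℝ × ℝ)} {γ : ℝ} {ν : ℝ → ℝ}
  (hν : ConvexOn ℝ Set.univ ν) (hfst : Integrable (fun z : ℝ × ℝ => z.1 ^ 2) P)
  (hνfin : ∀ c ρ : ℝ, 0 ≤ ρ → Integrable (fun z : ℝ × ℝ => moreau ν (c * z.1 + γ * z.2) ρ) P)

include hν hνfin in
lemma convexOn_integral_moreau (m : ℝ) {r : ℝ} (hr : 0 < r) :
    ConvexOn ℝ (Set.Ici 0) fun M => ∫ z, moreau ν (m * M / r * z.1 + γ * z.2) (M / r) ∂P := by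
  refine integral_convexOn_of_integrand_ae (convex_Ici 0)
    (ae_of_all _ fun z => ⟨convex_Ici 0, fun M hM N hN a b ha hb hab => ?_⟩) fun M hM =>
    hνfin _ _ (div_nonneg hM hr.le)
  have hle := (convexOn_moreau hν).2
    (x := (m * M / r * z.1 + γ * z.2, M / r)) (y := (m * N / r * z.1 + γ * z.2, N / r))
    ⟨trivial, div_nonneg hM hr.le⟩ ⟨trivial, div_nonneg hN hr.le⟩ ha hb hab
  simp only [Prod.fst_add, Prod.snd_add, Prod.smul_fst, Prod.smul_snd, smul_eq_mul] at hle ⊢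
  convert hle using 2
  · linear_combination -(γ * z.2) * hab
  · ring

include hfst hνfin

lemma integrable_tiltedMoreau (m : ℝ) {M r : ℝ} (hM : 0 ≤ M) (hr : 0 < r) :
    Integrable (fun z : ℝ × ℝ => tiltedMoreau ν z.1 (γ * z.2) M (m, r)) P :=
  (hνfin _ _ (div_nonneg hM hr.le)).sub (hfst.const_mul _)

lemma expectedPenalty_eq (m : ℝ) {M r : ℝ} (hM : 0 ≤ M) (hr : 0 < r) :
    expectedPenalty γ P ν M (m, r) = (∫ z, moreau ν (m * M / r * z.1 + γ * z.2) (M / r) ∂P)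
      - m ^ 2 * M / (2 * r) * ∫ z, z.1 ^ 2 ∂P := by
  rw [← integral_const_mul]
  exact integral_sub (hνfin _ _ (div_nonneg hM hr.le)) (hfst.const_mul _)

include hν

lemma concaveOn_expectedPenalty {M : ℝ} (hM : 0 ≤ M) :
    ConcaveOn ℝ (Set.univ ×ˢ Set.Ioi 0) (expectedPenalty γ P ν M) :=
  integral_concaveOn_of_integrand_ae (convex_univ.prod (convex_Ioi 0))
    (ae_of_all _ fun _ => concaveOn_tiltedMoreau hν _ _ hM) fun q hq =>
    integrable_tiltedMoreau hfst hνfin q.1 hM hq.2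

lemma expectedPenalty_le (m : ℝ) {M r : ℝ} (hM : 0 ≤ M) (hr : 0 < r) :
    expectedPenalty γ P ν M (m, r) ≤ ∫ z, ν (γ * z.2) ∂P :=
  integral_mono (integrable_tiltedMoreau hfst hνfin m hM hr)
    (by simpa [moreau_zero] using hνfin 0 0 le_rfl) fun _ => tiltedMoreau_le hν _ _ hM hr

end ExpectedPenalty

section GaussianProduct

variable {P : Measure ℝ} [IsProbabilityMeasure P]

lemma integrable_fst_gaussianReal_prod :
    Integrable Prod.fst ((gaussianReal 0 1).prod P) :=
  ((memLp_id_gaussianReal' 1 ENNReal.one_ne_top).integrable le_rfl).comp_fst P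

lemma integrable_fst_sq_gaussianReal_prod :
    Integrable (fun z : ℝ × ℝ => z.1 ^ 2) ((gaussianReal 0 1).prod P) :=
  ((memLp_id_gaussianReal' 2 ENNReal.ofNat_ne_top).comp_fst P).integrable_sq

lemma integral_sq_gaussianReal_zero_one : ∫ x, x ^ 2 ∂(gaussianReal 0 1) = 1 := by
  rw [← variance_of_integral_eq_zero aemeasurable_id' integral_id_gaussianReal,
    variance_fun_id_gaussianReal, NNReal.coe_one]

end GaussianProduct

section Objective

variable {τ γ : ℝ} {Pε Pβ : Measure ℝ} [IsProbabilityMeasure Pε] {ν : ℝ → ℝ}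
  {Cβ0 Cu C₁ C₂ cη Cη : ℝ}

lemma convex_asymBox : Convex ℝ (asymBox Cβ0 Cu C₁) :=
  (convex_Icc _ _).prod ((convex_Icc _ _).prod (convex_Icc _ _))

lemma isCompact_asymBox : IsCompact (asymBox Cβ0 Cu C₁) :=
  isCompact_Icc.prod (isCompact_Icc.prod isCompact_Icc)

lemma continuousOn_asymObj (hτ : τ ∈ Set.Icc (0 : ℝ) 1) (hε : Integrable id Pε)
    (hνcont : ContinuousOn
      (fun q : ℝ × ℝ => ∫ z, moreau ν (q.1 * z.1 + γ * z.2) q.2 ∂((gaussianReal 0 1).prod Pβ))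
      (Set.univ ×ˢ Set.Ici 0))
    (hcη : 0 < cη) :
    ContinuousOn (fun w : (ℝ × ℝ × ℝ) × (ℝ × ℝ) =>
        asymObj τ γ Pε Pβ ν w.1.1 w.1.2.1 w.1.2.2 w.2.1 w.2.2)
      (asymBox Cβ0 Cu C₁ ×ˢ (Set.Icc cη Cη ×ˢ Set.Ioc 0 C₂)) := by
  set D := asymBox Cβ0 Cu C₁ ×ˢ (Set.Icc cη Cη ×ˢ Set.Ioc 0 C₂)
  have hm : ∀ w ∈ D, 0 < w.2.1 := fun w hw => hcη.trans_le hw.2.1.1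
  have hr : ∀ w ∈ D, 0 < w.2.2 := fun w hw => hw.2.2.1
  have hdiv_m {f : (ℝ × ℝ × ℝ) × (ℝ × ℝ) → ℝ} (hf : Continuous f) :
      ContinuousOn (fun w => f w / w.2.1) D :=
    hf.continuousOn.div (by fun_prop) fun w hw => (hm w hw).ne'
  have hdiv_r {f : (ℝ × ℝ × ℝ) × (ℝ × ℝ) → ℝ} (hf : Continuous f) :
      ContinuousOn (fun w => f w / w.2.2) D :=
    hf.continuousOn.div (by fun_prop) fun w hw => (hr w hw).ne'
  have hloss : ContinuousOn (fun w : (ℝ × ℝ × ℝ) × (ℝ × ℝ) =>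
      expectedLoss τ ((gaussianReal 0 1).prod Pε) (w.1.1, w.1.2.1, w.1.2.2 / w.2.1)) D :=
    (continuousOn_expectedLoss hτ integrable_fst_gaussianReal_prod (hε.comp_snd _)).comp
      (ContinuousOn.prodMk (by fun_prop) (ContinuousOn.prodMk (by fun_prop)
        (hdiv_m (by fun_prop))))
      fun w hw => ⟨trivial, trivial, div_nonneg hw.1.2.2.1 (hm w hw).le⟩
  have hpen : ContinuousOn (fun w : (ℝ × ℝ × ℝ) × (ℝ × ℝ) =>
      ∫ z, moreau ν (w.2.1 * w.1.2.1 / w.2.2 * z.1 + γ * z.2) (w.1.2.1 / w.2.2)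
        ∂((gaussianReal 0 1).prod Pβ)) D :=
    hνcont.comp
      (f := fun w : (ℝ × ℝ × ℝ) × (ℝ × ℝ) => (w.2.1 * w.1.2.1 / w.2.2, w.1.2.1 / w.2.2))
      ((hdiv_r (by fun_prop)).prodMk (hdiv_r (by fun_prop)))
      fun w hw => ⟨trivial, div_nonneg hw.1.2.1.1 (hr w hw).le⟩
  have hcorr : ContinuousOn (fun w : (ℝ × ℝ × ℝ) × (ℝ × ℝ) =>
      w.2.1 ^ 2 * w.1.2.1 * γ / (2 * w.2.2)) D :=
    ContinuousOn.div (by fun_prop) (by fun_prop) fun w hw => (mul_pos two_pos (hr w hw)).ne'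
  exact (((hloss.sub hcorr).add (hpen.const_mul γ)).add (by fun_prop)).sub (by fun_prop)

variable (hτ : τ ∈ Set.Icc (0 : ℝ) 1) (hγ : 0 ≤ γ) (hε : Integrable id Pε)
  (hν : ConvexOn ℝ Set.univ ν)
  (hνfin : ∀ c ρ : ℝ, 0 ≤ ρ →
    Integrable (fun z : ℝ × ℝ => moreau ν (c * z.1 + γ * z.2) ρ) ((gaussianReal 0 1).prod Pβ))

include hτ hγ hε hν hνfin in
lemma convexOn_asymObj {m r : ℝ} (hm : 0 < m) (hr : 0 < r) :
    ConvexOn ℝ (asymBox Cβ0 Cu C₁) fun p => asymObj τ γ Pε Pβ ν p.1 p.2.1 p.2.2 m r := by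
  have hloss : ConvexOn ℝ (asymBox Cβ0 Cu C₁) fun p =>
      expectedLoss τ ((gaussianReal 0 1).prod Pε) (p.1, p.2.1, p.2.2 / m) :=
    (convexOn_expectedLoss_div hτ integrable_fst_gaussianReal_prod (hε.comp_snd _) hm).subset
      (fun p hp => ⟨trivial, trivial, hp.2.2.1⟩) convex_asymBox
  have hpen : ConvexOn ℝ (asymBox Cβ0 Cu C₁) fun p => γ •
      ∫ z, moreau ν (m * p.2.1 / r * z.1 + γ * z.2) (p.2.1 / r) ∂((gaussianReal 0 1).prod Pβ) :=
    (((convexOn_integral_moreau hν hνfin m hr).comp_linearMap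
      (LinearMap.fst ℝ ℝ ℝ ∘ₗ LinearMap.snd ℝ ℝ (ℝ × ℝ))).subset
        (fun p hp => hp.2.1.1) convex_asymBox).smul hγ
  refine ⟨convex_asymBox, fun p hp q hq a b ha hb hab => ?_⟩
  have hle := add_le_add (hloss.2 hp hq ha hb hab) (hpen.2 hp hq ha hb hab)
  simp only [asymObj, expectedLoss, Prod.fst_add, Prod.snd_add, Prod.smul_fst, Prod.smul_snd,
    smul_eq_mul] at hle ⊢
  linear_combination hle

variable [IsProbabilityMeasure Pβ]

omit [IsProbabilityMeasure Pε] in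
include hνfin in
lemma asymObj_eq_expectedLoss_add_expectedPenalty (b ρ m : ℝ) {M r : ℝ} (hM : 0 ≤ M)
    (hr : 0 < r) :
    asymObj τ γ Pε Pβ ν b M ρ m r
      = expectedLoss τ ((gaussianReal 0 1).prod Pε) (b, M, ρ / m)
        + γ * expectedPenalty γ ((gaussianReal 0 1).prod Pβ) ν M (m, r) + (m * ρ - M * r) / 2 := by
  rw [expectedPenalty_eq integrable_fst_sq_gaussianReal_prod hνfin m hM hr,
    integral_fun_fst fun x => x ^ 2, integral_sq_gaussianReal_zero_one]
  simp only [asymObj, expectedLoss, probReal_univ, smul_eq_mul]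
  ring

include hτ hγ hε hν hνfin

lemma concaveOn_asymObj {b M ρ : ℝ} (hM : 0 ≤ M) (hρ : 0 ≤ ρ) (hcη : 0 < cη) :
    ConcaveOn ℝ (Set.Icc cη Cη ×ˢ Set.Ioc 0 C₂)
      fun q : ℝ × ℝ => asymObj τ γ Pε Pβ ν b M ρ q.1 q.2 := by
  have hD : Convex ℝ (Set.Icc cη Cη ×ˢ Set.Ioc 0 C₂) := (convex_Icc _ _).prod (convex_Ioc _ _)
  have hloss : ConcaveOn ℝ (Set.Icc cη Cη ×ˢ Set.Ioc 0 C₂) fun q : ℝ × ℝ =>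
      expectedLoss τ ((gaussianReal 0 1).prod Pε) (b, M, ρ / q.1) :=
    ((concaveOn_expectedLoss_div hτ integrable_fst_gaussianReal_prod (hε.comp_snd _) b M
      hρ).comp_linearMap (LinearMap.fst ℝ ℝ ℝ)).subset (fun q hq => hcη.trans_le hq.1.1) hD
  have hpen : ConcaveOn ℝ (Set.Icc cη Cη ×ˢ Set.Ioc 0 C₂)
      (γ • expectedPenalty γ ((gaussianReal 0 1).prod Pβ) ν M) :=
    ((concaveOn_expectedPenalty hν integrable_fst_sq_gaussianReal_prod hνfin hM).subset
      (fun q hq => ⟨trivial, hq.2.1⟩) hD).smul hγ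
  have hlin : ConcaveOn ℝ (Set.Icc cη Cη ×ˢ Set.Ioc 0 C₂) fun q : ℝ × ℝ =>
      (q.1 * ρ - M * q.2) / 2 := by
    refine ⟨hD, fun p _ q _ x y _ _ _ => le_of_eq ?_⟩
    simp only [Prod.fst_add, Prod.snd_add, Prod.smul_fst, Prod.smul_snd, smul_eq_mul]
    ring
  exact ((hloss.add hpen).add hlin).congr fun q hq =>
    (asymObj_eq_expectedLoss_add_expectedPenalty hνfin b ρ q.1 hM hq.2.1).symm

lemma bddAbove_image_asymObj {b M ρ : ℝ} (hM : 0 ≤ M) (hρ : 0 ≤ ρ) (hcη : 0 < cη) :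
    BddAbove ((fun q : ℝ × ℝ => asymObj τ γ Pε Pβ ν b M ρ q.1 q.2) ''
      (Set.Icc cη Cη ×ˢ Set.Ioc 0 C₂)) := by
  refine ⟨expectedLoss τ ((gaussianReal 0 1).prod Pε) (b, M, 0)
    + γ * (∫ z, ν (γ * z.2) ∂((gaussianReal 0 1).prod Pβ)) + Cη * ρ / 2,
    Set.forall_mem_image.2 fun q hq => ?_⟩
  have hloss := expectedLoss_le hτ integrable_fst_gaussianReal_prod (hε.comp_snd _) b M
    (div_nonneg hρ (hcη.trans_le hq.1.1).le)
  have hpen := mul_le_mul_of_nonneg_left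
    (expectedPenalty_le hν integrable_fst_sq_gaussianReal_prod hνfin q.1 hM hq.2.1) hγ
  have hmρ : q.1 * ρ ≤ Cη * ρ := mul_le_mul_of_nonneg_right hq.1.2 hρ
  have hMr : 0 ≤ M * q.2 := mul_nonneg hM hq.2.1.le
  rw [asymObj_eq_expectedLoss_add_expectedPenalty hνfin b ρ q.1 hM hq.2.1]
  linarith

end Objective

section FixedPoint

variable {τ γ : ℝ} {Pε Pβ : Measure ℝ} [IsProbabilityMeasure Pε] [IsProbabilityMeasure Pβ]
  {ν : ℝ → ℝ} {Cβ0 Cu C₁ C₂ cη Cη Mη : ℝ} {p : ℝ × ℝ × ℝ}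

lemma isMinOn_expectedLoss_of_isMinOn_of_isMaxOn (hτ : τ ∈ Set.Icc (0 : ℝ) 1) (hγ : 0 ≤ γ)
    (hε : Integrable id Pε) (hν : ConvexOn ℝ Set.univ ν)
    (hνfin : ∀ c ρ : ℝ, 0 ≤ ρ →
      Integrable (fun z : ℝ × ℝ => moreau ν (c * z.1 + γ * z.2) ρ) ((gaussianReal 0 1).prod Pβ))
    (hνcont : ContinuousOn
      (fun q : ℝ × ℝ => ∫ z, moreau ν (q.1 * z.1 + γ * z.2) q.2 ∂((gaussianReal 0 1).prod Pβ))
      (Set.univ ×ˢ Set.Ici 0))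
    (hC₂ : 0 < C₂) (hcη : 0 < cη) (hp : p ∈ asymBox Cβ0 Cu C₁)
    (hmin : IsMinOn (asymFmax τ γ Pε Pβ ν cη Cη C₂) (asymBox Cβ0 Cu C₁) p)
    (hMη : Mη ∈ Set.Icc cη Cη)
    (hmax : IsMaxOn (asymG τ γ Pε Pβ ν Cβ0 Cu C₁ C₂) (Set.Icc cη Cη) Mη) :
    IsMinOn (fun t => expectedLoss τ ((gaussianReal 0 1).prod Pε) (p.1, p.2.1, t) + Mη ^ 2 * t / 2)
      (Set.Icc 0 (C₁ / Mη)) (p.2.2 / Mη) := by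
  have hM : 0 < Mη := hcη.trans_le hMη.1
  refine isMinOn_iff.2 fun t ht => le_of_forall_pos_le_add fun δ hδ => ?_
  obtain ⟨r, -, hr⟩ := exists_forall_le_add_of_isMinOn_of_isMaxOn
    (f := fun (p : ℝ × ℝ × ℝ) (q : ℝ × ℝ) => asymObj τ γ Pε Pβ ν p.1 p.2.1 p.2.2 q.1 q.2)
    isCompact_asymBox (Set.nonempty_Ioc.2 hC₂) (continuousOn_asymObj hτ hε hνcont hcη)
    (fun q hq => convexOn_asymObj hτ hγ hε hν hνfin (hcη.trans_le hq.1.1) hq.2.1)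
    (fun p hp => concaveOn_asymObj hτ hγ hε hν hνfin hp.2.1.1 hp.2.2.1 hcη)
    (fun p hp => bddAbove_image_asymObj hτ hγ hε hν hνfin hp.2.1.1 hp.2.2.1 hcη)
    hp hmin hMη hmax hδ
  have hle := hr (p.1, p.2.1, Mη * t)
    ⟨hp.1, hp.2.1, mul_nonneg hM.le ht.1, (le_div_iff₀' hM).1 ht.2⟩
  simp only [asymObj, mul_div_cancel_left₀ t hM.ne'] at hle
  have hlin : Mη ^ 2 * (p.2.2 / Mη) = Mη * p.2.2 := by
    rw [sq, mul_assoc, mul_div_cancel₀ _ hM.ne']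
  simp only [expectedLoss, hlin]
  linarith

lemma integral_mul_fst_add_snd_sub_sq_le (hε : MemLp id 2 Pε) (hε₀ : ∫ x, x ∂Pε = 0)
    (hp : p ∈ asymBox Cβ0 Cu C₁) :
    ∫ z, (p.2.1 * z.1 + z.2 - p.1) ^ 2 ∂((gaussianReal 0 1).prod Pε)
      ≤ Cu ^ 2 + (∫ x, x ^ 2 ∂Pε) + Cβ0 ^ 2 := by
  rw [integral_mul_fst_add_snd_sub_sq (memLp_id_gaussianReal' 2 ENNReal.ofNat_ne_top) hε
    integral_id_gaussianReal hε₀, integral_sq_gaussianReal_zero_one, mul_one]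
  have hM : p.2.1 ^ 2 ≤ Cu ^ 2 := pow_le_pow_left₀ hp.2.1.1 hp.2.1.2 2
  have hb : p.1 ^ 2 ≤ Cβ0 ^ 2 := sq_le_sq' hp.1.1 hp.1.2
  gcongr

theorem asym_rho1_fixed_point_general (hτ : τ ∈ Set.Icc (0 : ℝ) 1) (hγ : 0 ≤ γ)
    (hε : MemLp id 2 Pε) (hε₀ : ∫ x, x ∂Pε = 0) (hν : ConvexOn ℝ Set.univ ν)
    (hνfin : ∀ c ρ : ℝ, 0 ≤ ρ →
      Integrable (fun z : ℝ × ℝ => moreau ν (c * z.1 + γ * z.2) ρ) ((gaussianReal 0 1).prod Pβ))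
    (hνcont : ContinuousOn
      (fun q : ℝ × ℝ => ∫ z, moreau ν (q.1 * z.1 + γ * z.2) q.2 ∂((gaussianReal 0 1).prod Pβ))
      (Set.univ ×ˢ Set.Ici 0))
    (hC₂ : 0 < C₂) (hcη : 0 < cη)
    (hC₁ : √(Cu ^ 2 + (∫ x, x ^ 2 ∂Pε) + Cβ0 ^ 2) < C₁) (hp : p ∈ asymBox Cβ0 Cu C₁)
    (hmin : IsMinOn (asymFmax τ γ Pε Pβ ν cη Cη C₂) (asymBox Cβ0 Cu C₁) p)
    (hMη : Mη ∈ Set.Icc cη Cη)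
    (hmax : IsMaxOn (asymG τ γ Pε Pβ ν Cβ0 Cu C₁ C₂) (Set.Icc cη Cη) Mη) :
    p.2.2 = √(∫ z, (p.2.1 * z.1 + z.2 - p.1
      - proxPinball τ (p.2.1 * z.1 + z.2 - p.1) (p.2.2 / Mη)) ^ 2
        ∂((gaussianReal 0 1).prod Pε)) := by
  have hM : 0 < Mη := hcη.trans_le hMη.1
  have hloss := isMinOn_expectedLoss_of_isMinOn_of_isMaxOn hτ hγ (hε.integrable one_le_two) hν
    hνfin hνcont hC₂ hcη hp hmin hMη hmax
  have hprox := integral_sub_proxPinball_sq_eq_of_isMinOn hτ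
    (memLp_mul_fst_add_snd_sub (memLp_id_gaussianReal' 2 ENNReal.ofNat_ne_top) hε p.2.1 p.1)
    ⟨div_nonneg hp.2.2.1 hM.le, div_le_div_of_nonneg_right hp.2.2.2 hM.le⟩ hloss ?_
  · rw [hprox, ← mul_pow, mul_div_cancel₀ _ hM.ne', Real.sqrt_sq hp.2.2.1]
  · rw [← mul_pow, mul_div_cancel₀ _ hM.ne']
    exact (integral_mul_fst_add_snd_sub_sq_le hε hε₀ hp).trans_lt (Real.lt_sq_of_sqrt_lt hC₁)

end FixedPoint

/-- Lemma 15 of the paper, first-order characterization of `ρ₁*`.  Fix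
constants with `C_η > c_η`, `c_η < √((1/2)·min{τ²,(1−τ)²})` and
`C₁ > √(C_u² + E[ε₁²] + C_{β₀}²)`.  If `(β₀*, M_u*, ρ₁*)` is the unique minimizing triple of the
asymptotic program with `M_u* > 0`, and `M_η*` is the unique optimal `M_η`, then `ρ₁*` satisfies
`ρ₁* = √(E[(M_u* g₁ + ε₁ − β₀* − prox_{ℓ_τ}(M_u* g₁ + ε₁ − β₀*; ρ₁*/M_η*))²])`. -/
theorem asym_rho1_fixed_point
    (τ γ : ℝ) (hτ : τ ∈ Set.Ioo (0 : ℝ) 1) (hγ : γ ∈ Set.Ioo (0 : ℝ) (2 / Real.pi))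
    (Pε Pβ : Measure ℝ) [IsProbabilityMeasure Pε] [IsProbabilityMeasure Pβ]
    (hPε : NoiseAssumption Pε) (hPβ2 : Integrable (fun x => x ^ 2) Pβ)
    (ν : ℝ → ℝ) (hν : ConvexOn ℝ Set.univ ν)
    (hνfin : ∀ (c ρ : ℝ), 0 ≤ ρ →
      Integrable (fun z : ℝ × ℝ => moreau ν (c * z.1 + γ * z.2) ρ)
        ((gaussianReal 0 1).prod Pβ))
    (hνcont : ContinuousOn
      (fun q : ℝ × ℝ =>
        ∫ z, moreau ν (q.1 * z.1 + γ * z.2) q.2 ∂((gaussianReal 0 1).prod Pβ))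
      (Set.univ ×ˢ Set.Ici 0))
    (hνconj : ConjDerivAssumption γ Pβ ν)
    (Cβ0 Cu C₁ C₂ cη Cη : ℝ)
    (hCβ0 : 0 < Cβ0) (hCu : 0 < Cu) (hC₁ : 0 < C₁) (hC₂ : 0 < C₂)
    (hcη : 0 < cη) (hcηCη : cη < Cη)
    (hcη' : cη < Real.sqrt ((1 / 2) * min (τ ^ 2) ((1 - τ) ^ 2)))
    (hC₁' : Real.sqrt (Cu ^ 2 + (∫ x, x ^ 2 ∂Pε) + Cβ0 ^ 2) < C₁) :
    ∀ p ∈ asymBox Cβ0 Cu C₁,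
      IsMinOn (asymFmax τ γ Pε Pβ ν cη Cη C₂) (asymBox Cβ0 Cu C₁) p →
      0 < p.2.1 →
      ∀ Mη ∈ Set.Icc cη Cη,
        IsMaxOn (asymG τ γ Pε Pβ ν Cβ0 Cu C₁ C₂) (Set.Icc cη Cη) Mη →
        p.2.2 = Real.sqrt (∫ z, (p.2.1 * z.1 + z.2 - p.1
          - proxPinball τ (p.2.1 * z.1 + z.2 - p.1) (p.2.2 / Mη)) ^ 2
            ∂((gaussianReal 0 1).prod Pε)) :=
  fun _ hp hmin _ _ hMη hmax => asym_rho1_fixed_point_general (Set.Ioo_subset_Icc_self hτ) hγ.1.le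
    ((memLp_two_iff_integrable_sq aestronglyMeasurable_id).2 hPε.second_moment) hPε.mean_zero hν
    hνfin hνcont hC₂ hcη hC₁' hp hmin hMη hmax

end
end

section
/- Let {X_i}_{i=1}^n be i.i.d. N(0, I_d) random vectors in ℝ^d. Then, as d, n → ∞ with d/n → γ ∈ [0, ∞), for every δ > 0 the probability of the event { inf over (u, β₀) ∈ ℝ^d × ℝ with ‖u‖₂ ≤ 1, |β₀| ≤ 1, and max{‖u‖₂, |β₀|} = 1 of (1/n) Σ_{i=1}^n |X_iᵀu + β₀| ≥ √(2/π) − √γ − δ } converges to 1; that is, the liminf of this infimum is at least √(2/π) − √γ in probability. -/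
/-! Writing `|r|` as the larger of `r` and `-r` turns `∑ i, |X_i·u + β|` into a maximum over sign
vectors `s` of the bilinear Gaussian form `⟪s, X u⟫ + β ∑ i, s i`, so the infimum over `(u, β)` is a
Gaussian min-max. Gordon's comparison inequality bounds its lower tail by that of the decoupled
process `∑ i, |‖u‖ g i + β| + √n ⟪u, h⟫`, up to an independent term `√n ‖u‖ g₀` of order `√n`. For
the decoupled process, `⟪u, h⟫ ≥ -‖h‖ ≈ -√d`, while the first sum is at least about `n √(2/π)`: if
`‖u‖ = 1`, because `|x + β| ≥ |x| + β sign x` and `∑ i, sign (g i)` is small; if `|β| = 1`, because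
`∑ i, g i` is small and `√(2/π) ≤ 1`. Only four empirical averages enter, so Chebyshev's inequality
suffices.

Gordon's inequality compares two centred Gaussian laws. One passes from the first to the second by
exchanging Brownian increments of variance `1/N`. Each exchange changes the expectation of a smooth
`f` by a second-order term, whose sign is known, and an error `O(N ^ (-3/2))`. Here `f` is a smooth
version of the indicator of `∀ u, ∃ s, c (u, s) ≤ x (u, s)`: the probability that every row contains
a success in independent trials, whose mixed second derivatives are nonnegative across rows and
nonpositive within a row. -/

open MeasureTheory ProbabilityTheory Filter Finset

noncomputable section

/-- The standard Gaussian measure `N(0, I_d)` on `ℝ^d`. -/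
def stdGaussian (d : ℕ) : Measure (Fin d → ℝ) := Measure.pi fun _ => gaussianReal 0 1

section BoundedDerivatives

variable {E F : Type*} [NormedAddCommGroup E] [NormedSpace ℝ E] [NormedAddCommGroup F]
  [NormedSpace ℝ F]

/-- Membership in the space `C_b^N` of `N` times continuously differentiable functions which are
bounded together with their derivatives up to order `N`. -/
structure HasBoundedDerivs (N : ℕ) (f : E → ℝ) : Prop where
  contDiff : ContDiff ℝ N f
  exists_bound : ∀ i ≤ N, ∃ C, ∀ x, ‖iteratedFDeriv ℝ i f x‖ ≤ C

namespace HasBoundedDerivs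

variable {N : ℕ} {f g : E → ℝ}

lemma exists_norm_le (hf : HasBoundedDerivs N f) : ∃ C, ∀ x, ‖f x‖ ≤ C := by
  simpa using hf.exists_bound 0 N.zero_le

lemma const (c : ℝ) : HasBoundedDerivs N fun _ : E => c := by
  refine ⟨contDiff_const, fun i _ => ?_⟩
  rcases eq_or_ne i 0 with rfl | hi
  · exact ⟨‖c‖, fun x => by simp⟩
  · exact ⟨0, fun x => by simp [iteratedFDeriv_const_of_ne hi]⟩

lemma sub (hf : HasBoundedDerivs N f) (hg : HasBoundedDerivs N g) :
    HasBoundedDerivs N fun x => f x - g x := by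
  refine ⟨hf.contDiff.sub hg.contDiff, fun i hi => ?_⟩
  obtain ⟨C, hC⟩ := hf.exists_bound i hi
  obtain ⟨D, hD⟩ := hg.exists_bound i hi
  have hiN : (i : WithTop ℕ∞) ≤ N := mod_cast hi
  refine ⟨C + D, fun x => ?_⟩
  rw [fun_iteratedFDeriv_sub_apply (hf.contDiff.of_le hiN).contDiffAt
    (hg.contDiff.of_le hiN).contDiffAt]
  exact (norm_sub_le _ _).trans (add_le_add (hC x) (hD x))

lemma mul (hf : HasBoundedDerivs N f) (hg : HasBoundedDerivs N g) :
    HasBoundedDerivs N fun x => f x * g x := by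
  refine ⟨hf.contDiff.mul hg.contDiff, fun i hi => ?_⟩
  choose! C hC using hf.exists_bound
  choose! D hD using hg.exists_bound
  refine ⟨∑ k ∈ range (i + 1), i.choose k * C k * D (i - k), fun x => ?_⟩
  refine (norm_iteratedFDeriv_mul_le hf.contDiff hg.contDiff x (mod_cast hi)).trans
    (sum_le_sum fun k hk => ?_)
  have hkN : k ≤ N := (Nat.lt_succ_iff.mp (mem_range.mp hk)).trans hi
  have hC_nonneg : 0 ≤ C k := (norm_nonneg _).trans (hC k hkN x)
  gcongr
  exacts [hC k hkN x, hD (i - k) ((i.sub_le k).trans hi) x]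

lemma prod {α : Type*} {f : α → E → ℝ} (s : Finset α) (hf : ∀ a, HasBoundedDerivs N (f a)) :
    HasBoundedDerivs N fun x => ∏ a ∈ s, f a x := by
  induction s using Finset.cons_induction with
  | empty => simpa using const 1
  | cons a s ha ih => simpa using (hf a).mul ih

lemma comp_continuousLinearMap_add {f : F → ℝ} (hf : HasBoundedDerivs N f) (L : E →L[ℝ] F)
    (c : F) :
    HasBoundedDerivs N fun x => f (L x + c) := by
  have hfc : ContDiff ℝ N fun y => f (y + c) := hf.contDiff.comp (by fun_prop)
  refine ⟨hfc.comp L.contDiff, fun i hi => ?_⟩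
  obtain ⟨C, hC⟩ := hf.exists_bound i hi
  refine ⟨C * ∏ _ : Fin i, ‖L‖, fun x => ?_⟩
  have hcomp := L.iteratedFDeriv_comp_right hfc x (i := i) (mod_cast hi)
  rw [Function.comp_def] at hcomp
  rw [hcomp, iteratedFDeriv_comp_add_right]
  exact (ContinuousMultilinearMap.norm_compContinuousLinearMap_le _ _).trans
    (mul_le_mul_of_nonneg_right (hC _) (by positivity))

end HasBoundedDerivs

lemma hasBoundedDerivs_smoothTransition (N : ℕ) : HasBoundedDerivs N Real.smoothTransition := by
  refine ⟨Real.smoothTransition.contDiff, fun i _ => ?_⟩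
  cases i with
  | zero => exact ⟨1, fun x => by
      simpa [abs_of_nonneg (Real.smoothTransition.nonneg x)] using Real.smoothTransition.le_one x⟩
  | succ i =>
    have hsupp : HasCompactSupport (fderiv ℝ Real.smoothTransition) := by
      refine HasCompactSupport.of_support_subset_isCompact (isCompact_Icc (a := (0 : ℝ)) (b := 1))
        fun x hx => ?_
      contrapose! hx
      rw [Set.mem_Icc, not_and_or, not_le, not_le] at hx
      have hconst : ∃ c, Real.smoothTransition =ᶠ[nhds x] fun _ => c := by
        rcases hx with hx | hx
        · exact ⟨0, eventually_of_mem (Iio_mem_nhds hx) fun y hy =>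
            Real.smoothTransition.zero_of_nonpos (Set.mem_Iio.mp hy).le⟩
        · exact ⟨1, eventually_of_mem (Ioi_mem_nhds hx) fun y hy =>
            Real.smoothTransition.one_of_one_le (Set.mem_Ioi.mp hy).le⟩
      obtain ⟨c, hc⟩ := hconst
      simp [hc.fderiv_eq]
    have hsmooth : ContDiff ℝ (i + 1 : ℕ) Real.smoothTransition := Real.smoothTransition.contDiff
    obtain ⟨C, hC⟩ := (hsupp.iteratedFDeriv (𝕜 := ℝ) i).exists_bound_of_continuous
      ((hsmooth.fderiv_right (m := i) (by norm_cast)).continuous_iteratedFDeriv le_rfl)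
    exact ⟨C, fun x => by rw [← norm_iteratedFDeriv_fderiv]; exact hC x⟩

end BoundedDerivatives

section Taylor

variable {E : Type*} [NormedAddCommGroup E] [NormedSpace ℝ E] {f : E → ℝ}

lemma abs_taylor_two_remainder_le {C : ℝ} (hf : ContDiff ℝ 3 f)
    (hC : ∀ x, ‖iteratedFDeriv ℝ 3 f x‖ ≤ C) (x y : E) :
    |f (x + y) - f x - fderiv ℝ f x y - fderiv ℝ (fderiv ℝ f) x y y / 2| ≤ C * ‖y‖ ^ 3 := by
  have htaylor := map_add_eq_sum_add_integral_iteratedFDeriv (f := f) (x := x) (y := y) (n := 2)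
    fun _ _ => hf.contDiffAt
  have hthird (t : ℝ) : ‖iteratedFDeriv ℝ 3 f (x + t • y) fun _ => y‖ ≤ C * ‖y‖ ^ 3 := by
    simpa using ((iteratedFDeriv ℝ 3 f (x + t • y)).le_opNorm fun _ => y).trans
      (mul_le_mul_of_nonneg_right (hC _) (by positivity))
  have hremainder :
      ‖∫ t in (0 : ℝ)..1, (1 - t) ^ 2 • iteratedFDeriv ℝ 3 f (x + t • y) fun _ => y‖
        ≤ C * ‖y‖ ^ 3 := by
    suffices h : ∀ t ∈ Set.uIoc (0 : ℝ) 1,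
        ‖(1 - t) ^ 2 • iteratedFDeriv ℝ 3 f (x + t • y) fun _ => y‖ ≤ C * ‖y‖ ^ 3 by
      simpa using intervalIntegral.norm_integral_le_of_norm_le_const h
    intro t ht
    rw [Set.uIoc_of_le zero_le_one] at ht
    rw [norm_smul, Real.norm_eq_abs, abs_pow]
    refine (mul_le_of_le_one_left (norm_nonneg _) (pow_le_one₀ (abs_nonneg _) ?_)).trans (hthird t)
    exact abs_le.2 ⟨by linarith [ht.2], by linarith [ht.1]⟩
  have hexpand : f (x + y) - f x - fderiv ℝ f x y - fderiv ℝ (fderiv ℝ f) x y y / 2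
      = (∫ t in (0 : ℝ)..1, (1 - t) ^ 2 • iteratedFDeriv ℝ 3 f (x + t • y) fun _ => y) / 2 := by
    rw [htaylor]
    simp only [Nat.reduceAdd, smul_eq_mul, sum_range_succ, range_one, sum_singleton,
      Nat.factorial_zero, Nat.factorial_one, Nat.factorial_two, Nat.cast_one, Nat.cast_ofNat,
      inv_one, one_mul, iteratedFDeriv_zero_apply, iteratedFDeriv_one_apply,
      iteratedFDeriv_two_apply]
    ring
  rw [hexpand, abs_div, abs_two, ← Real.norm_eq_abs]
  exact (half_le_self (norm_nonneg _)).trans hremainder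

variable [MeasurableSpace E] [BorelSpace E] [SecondCountableTopology E] {μ : Measure E}

lemma integrable_bilin_apply_self (hμ : MemLp id 2 μ) (B : E →L[ℝ] E →L[ℝ] ℝ) :
    Integrable (fun x => B x x) μ := by
  have hsq : Integrable (fun x => ‖x‖ ^ 2) μ := hμ.integrable_norm_pow (by norm_num)
  refine (hsq.const_mul ‖B‖).mono' (by fun_prop) (ae_of_all _ fun x => ?_)
  exact (B.le_opNorm₂ x x).trans_eq (by ring)

lemma abs_integral_comp_add_smul_sub_le [CompleteSpace E] [IsProbabilityMeasure μ] {C : ℝ}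
    (hf : ContDiff ℝ 3 f) (hC : ∀ x, ‖iteratedFDeriv ℝ 3 f x‖ ≤ C)
    (hfb : ∃ B, ∀ x, ‖f x‖ ≤ B) (hμ : MemLp id 3 μ) (hμ_zero : ∫ x, x ∂μ = 0)
    (w : E) {r : ℝ} (hr : 0 ≤ r) :
    |∫ x, f (w + r • x) ∂μ - (f w + r ^ 2 / 2 * ∫ x, fderiv ℝ (fderiv ℝ f) w x x ∂μ)|
      ≤ C * (∫ x, ‖x‖ ^ 3 ∂μ) * r ^ 3 := by
  have hfint : Integrable (fun x => f (w + r • x)) μ :=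
    let ⟨B, hB⟩ := hfb
    .of_bound (by have := hf.continuous; fun_prop) B (ae_of_all _ fun x => hB _)
  have hid : Integrable id μ := hμ.integrable (by norm_num)
  have hcube : Integrable (fun x => ‖x‖ ^ 3) μ := hμ.integrable_norm_pow (by norm_num)
  have hlin : Integrable (fun x => fderiv ℝ f w x) μ := (fderiv ℝ f w).integrable_comp hid
  have hquad : Integrable (fun x => fderiv ℝ (fderiv ℝ f) w x x) μ :=
    integrable_bilin_apply_self (hμ.mono_exponent (by norm_num)) _
  have hlin_zero : ∫ x, fderiv ℝ f w x ∂μ = 0 := by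
    simpa [hμ_zero] using (fderiv ℝ f w).integral_comp_comm hid
  have hexpand : ∫ x, f (w + r • x) ∂μ - (f w + r ^ 2 / 2 * ∫ x, fderiv ℝ (fderiv ℝ f) w x x ∂μ)
      = ∫ x, (f (w + r • x) - f w - r * fderiv ℝ f w x
          - r ^ 2 / 2 * fderiv ℝ (fderiv ℝ f) w x x) ∂μ := by
    have hfint_sub : Integrable (fun x => f (w + r • x) - f w) μ := hfint.sub (integrable_const _)
    rw [integral_sub (by exact hfint_sub.sub (hlin.const_mul r)) (by fun_prop),
      integral_sub hfint_sub (by fun_prop), integral_sub hfint (by fun_prop),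
      integral_const_mul, integral_const_mul, hlin_zero]
    simp only [integral_const, probReal_univ, smul_eq_mul, one_mul, mul_zero, sub_zero]
    ring
  rw [hexpand, ← Real.norm_eq_abs, mul_right_comm, ← integral_const_mul]
  refine norm_integral_le_of_norm_le (hcube.const_mul _) (ae_of_all _ fun x => ?_)
  convert! abs_taylor_two_remainder_le hf hC w (r • x) using 1
  · simp only [map_smul, smul_apply, smul_eq_mul, Real.norm_eq_abs]
    ring_nf
  · rw [norm_smul, Real.norm_of_nonneg hr]
    ring

end Taylor

section Interpolation

variable {E : Type*} [NormedAddCommGroup E] [NormedSpace ℝ E] [MeasurableSpace E]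
  {μ ν : Measure E}

/-- The law of `√t • x` for `x` distributed according to `μ`. If `μ` is a centred Gaussian measure,
these are the marginals of the Brownian motion with law `μ` at time one. -/
def brownianMarginal (μ : Measure E) (t : ℝ) : Measure E :=
  μ.map (√t • ContinuousLinearMap.id ℝ E)

lemma brownianMarginal_zero [IsProbabilityMeasure μ] : brownianMarginal μ 0 = Measure.dirac 0 := by
  simp [brownianMarginal, Pi.zero_def, Measure.map_const]

lemma brownianMarginal_one : brownianMarginal μ 1 = μ := by
  simp [brownianMarginal]

variable [BorelSpace E]

instance [IsProbabilityMeasure μ] (t : ℝ) : IsProbabilityMeasure (brownianMarginal μ t) :=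
  Measure.isProbabilityMeasure_map (by fun_prop)

lemma integral_brownianMarginal {f : E → ℝ} (hf : Continuous f) (t : ℝ) :
    ∫ x, f x ∂brownianMarginal μ t = ∫ x, f (√t • x) ∂μ := by
  rw [brownianMarginal, integral_map (by fun_prop) hf.aestronglyMeasurable]
  rfl

variable [SecondCountableTopology E] [CompleteSpace E]

lemma brownianMarginal_conv [IsGaussian μ] (hμ : ∫ x, x ∂μ = 0) {s t : ℝ} (hs : 0 ≤ s)
    (ht : 0 ≤ t) : brownianMarginal μ s ∗ brownianMarginal μ t = brownianMarginal μ (s + t) := by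
  refine Measure.ext_of_charFunDual (funext fun L => ?_)
  have hcharFun {r : ℝ} (hr : 0 ≤ r) :
      charFunDual (brownianMarginal μ r) L = Complex.exp (-(r * Var[L; μ] : ℝ) / 2) := by
    have hL : ⇑(L ∘SL (√r • ContinuousLinearMap.id ℝ E)) = fun x => √r * L x := by ext x; simp
    rw [brownianMarginal, charFunDual_map, IsGaussian.charFunDual_eq_of_forall_strongDual_eq_zero
      fun L' => by rw [IsGaussian.integral_dual, hμ, map_zero]]
    rw [hL, variance_const_mul, Real.sq_sqrt hr]
  rw [charFunDual_conv, hcharFun hs, hcharFun ht, hcharFun (add_nonneg hs ht), ← Complex.exp_add]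
  push_cast
  ring_nf

lemma le_of_forall_le_add_sqrt_pow_three {φ : ℝ → ℝ} {C : ℝ}
    (hφ : ∀ s h, 0 ≤ s → 0 ≤ h → s + h ≤ 1 → φ s ≤ φ (s + h) + C * √h ^ 3) : φ 0 ≤ φ 1 := by
  have hsteps (N : ℕ) (hN : N ≠ 0) (k : ℕ) (hk : k ≤ N) :
      φ 0 ≤ φ (k / N) + k * (C * √(1 / N) ^ 3) := by
    have hN_pos : (0 : ℝ) < N := by positivity
    induction k with
    | zero => simp
    | succ k ih =>
      have hstep := hφ (k / N) (1 / N) (by positivity) (by positivity)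
        (by rw [← add_div, div_le_one hN_pos]; exact_mod_cast hk)
      rw [← add_div] at hstep
      push_cast
      linarith [ih (k.le_succ.trans hk)]
  have htotal : ∀ᶠ N : ℕ in atTop, φ 0 ≤ φ 1 + C * √(1 / N) := by
    filter_upwards [eventually_ne_atTop 0] with N hN
    convert! hsteps N hN N le_rfl using 2
    · rw [div_self (by positivity)]
    · rw [pow_succ, Real.sq_sqrt (by positivity)]
      field_simp
  have hlim : Tendsto (fun N : ℕ => φ 1 + C * √(1 / N)) atTop (nhds (φ 1)) := by
    simpa using ((tendsto_one_div_atTop_nhds_zero_nat (𝕜 := ℝ)).sqrt.const_mul C).const_add (φ 1)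
  exact ge_of_tendsto hlim htotal

lemma exists_integral_conv_brownianMarginal_le [IsGaussian μ] [IsGaussian ν]
    (hμ : ∫ x, x ∂μ = 0) (hν : ∫ x, x ∂ν = 0) {f : E → ℝ} (hf : HasBoundedDerivs 3 f)
    (hμν : ∀ w, ∫ x, fderiv ℝ (fderiv ℝ f) w x x ∂μ ≤ ∫ x, fderiv ℝ (fderiv ℝ f) w x x ∂ν) :
    ∃ K, ∀ (ρ : Measure E) [IsProbabilityMeasure ρ] (h : ℝ),
      ∫ x, f x ∂(ρ ∗ brownianMarginal μ h) ≤ ∫ x, f x ∂(ρ ∗ brownianMarginal ν h) + K * √h ^ 3 := by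
  obtain ⟨B, hB⟩ := hf.exists_norm_le
  obtain ⟨C, hC⟩ := hf.exists_bound 3 le_rfl
  have hfc : Continuous f := hf.contDiff.continuous
  have hfint (τ : Measure E) [IsProbabilityMeasure τ] : Integrable f τ :=
    .of_bound hfc.aestronglyMeasurable B (ae_of_all _ hB)
  refine ⟨C * ∫ x, ‖x‖ ^ 3 ∂μ + C * ∫ x, ‖x‖ ^ 3 ∂ν, fun ρ _ h => ?_⟩
  have hpoint (w : E) : ∫ x, f (w + x) ∂brownianMarginal μ h ≤ ∫ x, f (w + x) ∂brownianMarginal ν h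
      + (C * ∫ x, ‖x‖ ^ 3 ∂μ + C * ∫ x, ‖x‖ ^ 3 ∂ν) * √h ^ 3 := by
    have hexpand (τ : Measure E) [IsGaussian τ] (hτ : ∫ x, x ∂τ = 0) :=
      abs_le.mp (abs_integral_comp_add_smul_sub_le hf.contDiff hC
        ⟨B, hB⟩ (IsGaussian.memLp_id τ 3 (by norm_num)) hτ w h.sqrt_nonneg)
    rw [integral_brownianMarginal (by fun_prop), integral_brownianMarginal (by fun_prop)]
    have hsecond := mul_le_mul_of_nonneg_left (hμν w) (by positivity : 0 ≤ √h ^ 2 / 2)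
    linarith [(hexpand μ hμ).2, (hexpand ν hν).1]
  have hint (τ : Measure E) [IsProbabilityMeasure τ] :
      Integrable (fun w => ∫ x, f (w + x) ∂τ) ρ := by
    have hprod : Integrable (fun p : E × E => f (p.1 + p.2)) (ρ.prod τ) :=
      .of_bound (by fun_prop) B (ae_of_all _ fun _ => hB _)
    exact hprod.integral_prod_left
  rw [integral_conv (hfint _), integral_conv (hfint _)]
  calc _ ≤ ∫ w, (∫ x, f (w + x) ∂brownianMarginal ν h
        + (C * ∫ x, ‖x‖ ^ 3 ∂μ + C * ∫ x, ‖x‖ ^ 3 ∂ν) * √h ^ 3) ∂ρ :=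
      integral_mono (hint _) ((hint _).add (integrable_const _)) hpoint
    _ = _ := by
      rw [integral_add (hint _) (integrable_const _)]
      simp

theorem integral_le_integral_of_fderiv_fderiv_le [IsGaussian μ] [IsGaussian ν]
    (hμ : ∫ x, x ∂μ = 0) (hν : ∫ x, x ∂ν = 0) {f : E → ℝ} (hf : HasBoundedDerivs 3 f)
    (hμν : ∀ w, ∫ x, fderiv ℝ (fderiv ℝ f) w x x ∂μ ≤ ∫ x, fderiv ℝ (fderiv ℝ f) w x x ∂ν) :
    ∫ x, f x ∂μ ≤ ∫ x, f x ∂ν := by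
  obtain ⟨K, hK⟩ := exists_integral_conv_brownianMarginal_le hμ hν hf hμν
  -- The Brownian increments up to time `t` come from `ν`, the remaining ones from `μ`.
  let φ (t : ℝ) := ∫ x, f x ∂(brownianMarginal ν t ∗ brownianMarginal μ (1 - t))
  suffices h : φ 0 ≤ φ 1 by simpa [φ, brownianMarginal_zero, brownianMarginal_one] using h
  refine le_of_forall_le_add_sqrt_pow_three (C := K) fun s h hs hh hsh => ?_
  have hrest : 0 ≤ 1 - (s + h) := by linarith
  convert! hK (brownianMarginal ν s ∗ brownianMarginal μ (1 - (s + h))) h using 2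
  · rw [Measure.conv_assoc, brownianMarginal_conv hμ hrest hh]
    ring_nf
  · rw [Measure.conv_assoc, Measure.conv_comm (brownianMarginal μ _), ← Measure.conv_assoc,
      brownianMarginal_conv hν hs hh]

end Interpolation

section Kahane

variable {E F ι : Type*} [NormedAddCommGroup E] [InnerProductSpace ℝ E] [NormedAddCommGroup F]
  [InnerProductSpace ℝ F]

/-- The Gaussian vector `(⟪a i, x⟫)ᵢ`, as a function of a standard Gaussian point `x`. -/
def innerFamily (a : ι → E) : E →L[ℝ] ι → ℝ :=
  ContinuousLinearMap.pi fun i => innerSL ℝ (a i)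

@[simp]
lemma innerFamily_apply (a : ι → E) (x : E) (i : ι) : innerFamily a x i = inner ℝ (a i) x := rfl

variable [FiniteDimensional ℝ E] [MeasurableSpace E] [BorelSpace E] [FiniteDimensional ℝ F]
  [MeasurableSpace F] [BorelSpace F] [Fintype ι]

lemma integral_inner_mul_inner_stdGaussian (a b : E) :
    ∫ x, inner ℝ a x * inner ℝ b x ∂ProbabilityTheory.stdGaussian E = inner ℝ a b := by
  have hcov := covarianceBilin_apply (μ := ProbabilityTheory.stdGaussian E)
    IsGaussian.memLp_two_id a b
  simp only [covarianceBilin_stdGaussian, integral_id_stdGaussian, sub_zero, id_eq] at hcov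
  exact hcov.symm

lemma integral_map_innerFamily (a : ι → E) :
    ∫ z, z ∂(ProbabilityTheory.stdGaussian E).map (innerFamily a) = 0 := by
  rw [integral_map (by fun_prop) (by fun_prop),
    (innerFamily a).integral_comp_comm IsGaussian.integrable_fun_id, integral_id_stdGaussian,
    map_zero]

variable [DecidableEq ι]

lemma integral_bilin_map_innerFamily (a : ι → E) (B : (ι → ℝ) →L[ℝ] (ι → ℝ) →L[ℝ] ℝ) :
    ∫ x, B x x ∂(ProbabilityTheory.stdGaussian E).map (innerFamily a)
      = ∑ i, ∑ j, B (Pi.single i 1) (Pi.single j 1) * inner ℝ (a i) (a j) := by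
  have hbilin (x : E) : B (innerFamily a x) (innerFamily a x)
      = ∑ i, ∑ j, B (Pi.single i 1) (Pi.single j 1) * (inner ℝ (a i) x * inner ℝ (a j) x) := by
    conv_lhs => rw [pi_eq_sum_univ' (innerFamily a x)]
    simp only [map_sum, map_smul, _root_.sum_apply, smul_apply, smul_eq_mul, mul_sum,
      innerFamily_apply]
    rw [Finset.sum_comm]
    refine sum_congr rfl fun i _ => sum_congr rfl fun j _ => ?_
    ring
  have hint (i j : ι) : Integrable (fun x => inner ℝ (a i) x * inner ℝ (a j) x)
      (ProbabilityTheory.stdGaussian E) :=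
    (IsGaussian.memLp_two_id.const_inner (a i)).integrable_mul
      (IsGaussian.memLp_two_id.const_inner (a j))
  rw [integral_map (by fun_prop) (by fun_prop), integral_congr_ae (ae_of_all _ hbilin),
    integral_finsetSum _ fun i _ => by fun_prop]
  refine sum_congr rfl fun i _ => ?_
  rw [integral_finsetSum _ fun j _ => by fun_prop]
  refine sum_congr rfl fun j _ => ?_
  rw [integral_const_mul, integral_inner_mul_inner_stdGaussian]

theorem integral_innerFamily_le_of_fderiv_fderiv_mul_inner_le {f : (ι → ℝ) → ℝ}
    (hf : HasBoundedDerivs 3 f) {a : ι → E} {b : ι → F}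
    (hab : ∀ w i j, fderiv ℝ (fderiv ℝ f) w (Pi.single i 1) (Pi.single j 1) * inner ℝ (a i) (a j)
      ≤ fderiv ℝ (fderiv ℝ f) w (Pi.single i 1) (Pi.single j 1) * inner ℝ (b i) (b j)) :
    ∫ x, f (innerFamily a x) ∂ProbabilityTheory.stdGaussian E
      ≤ ∫ y, f (innerFamily b y) ∂ProbabilityTheory.stdGaussian F := by
  have hfc : Continuous f := hf.contDiff.continuous
  rw [← integral_map (φ := innerFamily a) (by fun_prop) (by fun_prop),
    ← integral_map (φ := innerFamily b) (by fun_prop) (by fun_prop)]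
  refine integral_le_integral_of_fderiv_fderiv_le (integral_map_innerFamily a)
    (integral_map_innerFamily b) hf fun w => ?_
  rw [integral_bilin_map_innerFamily, integral_bilin_map_innerFamily]
  exact sum_le_sum fun i _ => sum_le_sum fun j _ => hab w i j

end Kahane

section SuccessProbability

variable {ι κ σ : Type*} [Fintype ι] [Fintype κ] [Fintype σ]

lemma prod_update_update_add_prod [DecidableEq ι] (q : ι → ℝ) {i j : ι} (hij : i ≠ j) (a b : ℝ) :
    ∏ k, Function.update (Function.update q i a) j b k + ∏ k, q k
      = ∏ k, Function.update q i a k + ∏ k, Function.update q j b k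
        + (∏ k ∈ univ \ {i, j}, q k) * ((a - q i) * (b - q j)) := by
  have hsplit (r : ι → ℝ) : ∏ k, r k = r i * r j * ∏ k ∈ univ \ {i, j}, r k := by
    rw [← prod_sdiff (subset_univ {i, j}), prod_pair hij, mul_comm]
  have hrest (r : ι → ℝ) (hr : ∀ k, k ≠ i → k ≠ j → r k = q k) :
      ∏ k ∈ univ \ {i, j}, r k = ∏ k ∈ univ \ {i, j}, q k :=
    prod_congr rfl fun k hk => by grind
  rw [hsplit, hsplit q, hsplit (Function.update q i a), hsplit (Function.update q j b),
    hrest _ (by grind), hrest (Function.update q i a) (by grind),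
    hrest (Function.update q j b) (by grind)]
  simp only [Function.update_self, Function.update_of_ne hij, Function.update_of_ne hij.symm]
  ring

/-- The probability of at least one success in independent trials with success probabilities `x`,
used as a polynomial extension of the indicator of `∃ s, x s = 1`. -/
def someSucceeds (x : σ → ℝ) : ℝ := 1 - ∏ s, (1 - x s)

/-- The probability that every row contains a success in independent trials with success
probabilities `p`, used as a polynomial extension of the indicator of `∀ u, ∃ s, p (u, s) = 1`. -/
def everyRowSucceeds (p : κ × σ → ℝ) : ℝ := ∏ u, someSucceeds fun s => p (u, s)

lemma someSucceeds_nonneg {x : σ → ℝ} (hx : ∀ s, x s ∈ Set.Icc 0 1) : 0 ≤ someSucceeds x :=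
  sub_nonneg.2 (prod_le_one (fun s _ => sub_nonneg.2 (hx s).2) fun s _ => sub_le_self _ (hx s).1)

lemma someSucceeds_eq_one {x : σ → ℝ} (hx : ∃ s, x s = 1) : someSucceeds x = 1 := by
  obtain ⟨s, hs⟩ := hx
  rw [someSucceeds, prod_eq_zero (mem_univ s) (by rw [hs, sub_self]), sub_zero]

lemma someSucceeds_le_one {x : σ → ℝ} (hx : ∀ s, x s ∈ Set.Icc 0 1) : someSucceeds x ≤ 1 :=
  sub_le_self _ (prod_nonneg fun s _ => sub_nonneg.2 (hx s).2)

lemma everyRowSucceeds_mem_Icc {p : κ × σ → ℝ} (hp : ∀ i, p i ∈ Set.Icc 0 1) :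
    everyRowSucceeds p ∈ Set.Icc 0 1 :=
  ⟨prod_nonneg fun _ _ => someSucceeds_nonneg fun _ => hp _,
    prod_le_one (fun _ _ => someSucceeds_nonneg fun _ => hp _)
      fun _ _ => someSucceeds_le_one fun _ => hp _⟩

lemma everyRowSucceeds_eq_one {p : κ × σ → ℝ} (hp : ∀ u, ∃ s, p (u, s) = 1) :
    everyRowSucceeds p = 1 :=
  prod_eq_one fun u _ => someSucceeds_eq_one (hp u)

lemma everyRowSucceeds_eq_zero {p : κ × σ → ℝ} (hp : ∃ u, ∀ s, p (u, s) = 0) :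
    everyRowSucceeds p = 0 := by
  obtain ⟨u, hu⟩ := hp
  exact prod_eq_zero (mem_univ u) (by simp [someSucceeds, hu])

variable [DecidableEq κ] [DecidableEq σ]

lemma le_someSucceeds_update {x : σ → ℝ} (hx : ∀ s, x s ≤ 1) {s : σ} {a : ℝ} (ha : x s ≤ a) :
    someSucceeds x ≤ someSucceeds (Function.update x s a) := by
  have hsplit (y : σ → ℝ) : ∏ t, (1 - y t) = (1 - y s) * ∏ t ∈ univ.erase s, (1 - y t) :=
    (mul_prod_erase univ _ (mem_univ s)).symm
  have hrest : ∏ t ∈ univ.erase s, (1 - Function.update x s a t)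
      = ∏ t ∈ univ.erase s, (1 - x t) :=
    prod_congr rfl fun t ht => by rw [Function.update_of_ne (ne_of_mem_erase ht)]
  have hnonneg : 0 ≤ ∏ t ∈ univ.erase s, (1 - x t) := prod_nonneg fun t _ => sub_nonneg.2 (hx t)
  rw [someSucceeds, someSucceeds, hsplit, hsplit, hrest, Function.update_self]
  gcongr

lemma someSucceeds_update_update_add_le {x : σ → ℝ} (hx : ∀ s, x s ≤ 1) {s t : σ} (hst : s ≠ t)
    {a b : ℝ} (ha : x s ≤ a) (hb : x t ≤ b) :
    someSucceeds (Function.update (Function.update x s a) t b) + someSucceeds x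
      ≤ someSucceeds (Function.update x s a) + someSucceeds (Function.update x t b) := by
  have hsplit := prod_update_update_add_prod (fun r => 1 - x r) hst (1 - a) (1 - b)
  have hcompl (y : σ → ℝ) (r : σ) (c : ℝ) :
      Function.update (fun q => 1 - y q) r (1 - c) = fun q => 1 - Function.update y r c q :=
    funext fun q => (Function.apply_update (fun _ z => 1 - z) y r c q).symm
  rw [hcompl, hcompl, hcompl] at hsplit
  have hrest : 0 ≤ (∏ r ∈ univ \ {s, t}, (1 - x r)) * ((a - x s) * (b - x t)) :=
    mul_nonneg (prod_nonneg fun r _ => sub_nonneg.2 (hx r))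
      (mul_nonneg (sub_nonneg.2 ha) (sub_nonneg.2 hb))
  simp only [someSucceeds]
  linarith

lemma someSucceeds_row_update {κ : Type*} [DecidableEq κ] (p : κ × σ → ℝ)
    (u : κ) (s : σ) (a : ℝ) :
    (fun v => someSucceeds fun t => Function.update p (u, s) a (v, t))
      = Function.update (fun v => someSucceeds fun t => p (v, t)) u
          (someSucceeds (Function.update (fun t => p (u, t)) s a)) := by
  ext v
  rcases eq_or_ne v u with rfl | hv
  · rw [Function.update_self]
    congr 1
    ext t
    simp [Function.update_apply]
  · simp [Function.update_of_ne, hv]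

lemma everyRowSucceeds_update_add_le {p : κ × σ → ℝ} (hp : ∀ i, p i ∈ Set.Icc 0 1) {u v : κ}
    (huv : u ≠ v) {s t : σ} {a b : ℝ} (ha : p (u, s) ≤ a) (hb : p (v, t) ≤ b) :
    everyRowSucceeds (Function.update p (u, s) a) + everyRowSucceeds (Function.update p (v, t) b)
      ≤ everyRowSucceeds (Function.update (Function.update p (u, s) a) (v, t) b)
        + everyRowSucceeds p := by
  have hrow : (fun r => Function.update p (u, s) a (v, r)) = fun r => p (v, r) := by
    ext r
    simp [huv.symm]
  simp only [everyRowSucceeds, someSucceeds_row_update, hrow]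
  rw [prod_update_update_add_prod _ huv]
  have hu := le_someSucceeds_update (x := fun r => p (u, r)) (fun r => (hp _).2) ha
  have hv := le_someSucceeds_update (x := fun r => p (v, r)) (fun r => (hp _).2) hb
  refine le_add_of_nonneg_right (mul_nonneg (prod_nonneg fun w _ => ?_)
    (mul_nonneg (sub_nonneg.2 hu) (sub_nonneg.2 hv)))
  exact someSucceeds_nonneg fun r => hp _

lemma everyRowSucceeds_update_update_add_le {p : κ × σ → ℝ} (hp : ∀ i, p i ∈ Set.Icc 0 1) (u : κ)
    {s t : σ} (hst : s ≠ t) {a b : ℝ} (ha : p (u, s) ≤ a) (hb : p (u, t) ≤ b) :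
    everyRowSucceeds (Function.update (Function.update p (u, s) a) (u, t) b) + everyRowSucceeds p
      ≤ everyRowSucceeds (Function.update p (u, s) a)
        + everyRowSucceeds (Function.update p (u, t) b) := by
  have hrow : (fun r => Function.update p (u, s) a (u, r))
      = Function.update (fun r => p (u, r)) s a := by
    ext r
    simp [Function.update_apply]
  have hsome := someSucceeds_update_update_add_le (x := fun r => p (u, r)) (fun r => (hp _).2) hst
    ha hb
  have hrest : 0 ≤ ∏ v ∈ univ \ {u}, someSucceeds fun r => p (v, r) :=
    prod_nonneg fun v _ => someSucceeds_nonneg fun r => hp _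
  have hsplit : everyRowSucceeds p = (someSucceeds fun r => p (u, r)) *
      ∏ v ∈ univ \ {u}, someSucceeds fun r => p (v, r) := by
    rw [everyRowSucceeds, ← prod_sdiff (subset_univ {u}), prod_singleton, mul_comm]
  rw [hsplit]
  simp only [everyRowSucceeds, someSucceeds_row_update, hrow, Function.update_idem,
    prod_update_of_mem (mem_univ u)]
  rw [← add_mul, ← add_mul]
  exact mul_le_mul_of_nonneg_right hsome hrest

end SuccessProbability

section MixedDerivatives

variable {E : Type*} [NormedAddCommGroup E] [NormedSpace ℝ E] {f : E → ℝ}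

lemma fderiv_apply_nonneg {x v : E} (hf : DifferentiableAt ℝ f x)
    (hv : ∀ t : ℝ, 0 ≤ t → f x ≤ f (x + t • v)) :
    0 ≤ fderiv ℝ f x v := by
  have hderiv := (hf.hasFDerivAt.hasLineDerivAt v).tendsto_slope_zero_right
  refine ge_of_tendsto hderiv (eventually_mem_nhdsWithin.mono fun t ht => ?_)
  exact smul_nonneg (inv_nonneg.2 ht.le) (sub_nonneg.2 (hv t ht.le))

lemma fderiv_fderiv_apply_nonneg (hf : ContDiff ℝ 2 f) {v w : E}
    (hvw : ∀ x, ∀ s t : ℝ, 0 ≤ s → 0 ≤ t →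
      f (x + s • v) + f (x + t • w) ≤ f (x + s • v + t • w) + f x) (x : E) :
    0 ≤ fderiv ℝ (fderiv ℝ f) x v w := by
  have hf' : Differentiable ℝ f := hf.differentiable (by norm_num)
  have hf'' : Differentiable ℝ (fderiv ℝ f) :=
    (hf.fderiv_right (m := 1) (by norm_num)).differentiable (by norm_num)
  have hmono (s : ℝ) (hs : 0 ≤ s) : fderiv ℝ f x w ≤ fderiv ℝ f (x + s • v) w := by
    have hdiff : HasFDerivAt (fun y => f (y + s • v) - f y)
        (fderiv ℝ f (x + s • v) - fderiv ℝ f x) x :=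
      ((hasFDerivAt_comp_add_right (s • v)).2 (hf' _).hasFDerivAt).sub (hf' x).hasFDerivAt
    rw [← sub_nonneg, ← sub_apply, ← hdiff.fderiv]
    refine fderiv_apply_nonneg hdiff.differentiableAt fun t ht => ?_
    rw [add_right_comm]
    linarith [hvw x s t hs ht]
  have hclm : HasFDerivAt (fun y => fderiv ℝ f y w)
      ((ContinuousLinearMap.apply ℝ ℝ w) ∘L fderiv ℝ (fderiv ℝ f) x) x :=
    (ContinuousLinearMap.apply ℝ ℝ w).hasFDerivAt.comp x (hf'' x).hasFDerivAt
  simpa [hclm.fderiv] using fderiv_apply_nonneg hclm.differentiableAt hmono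

end MixedDerivatives

section SmoothMinMaxIndicator

lemma isClosed_forall_exists_le {κ σ : Type*} [Finite σ] (c : κ × σ → ℝ) :
    IsClosed {x : κ × σ → ℝ | ∀ u, ∃ s, c (u, s) ≤ x (u, s)} := by
  simp only [Set.ofPred_forall, Set.ofPred_exists]
  exact isClosed_iInter fun u => isClosed_iUnion_of_finite fun s =>
    isClosed_le continuous_const (by fun_prop)

variable {ι κ σ : Type*} [Fintype κ] [Fintype σ]

/-- A coordinatewise smooth approximation from above of the indicator of `c i ≤ x i`, which sharpens
as `N → ∞`. -/
def softThreshold (c : ι → ℝ) (N : ℕ) (x : ι → ℝ) (i : ι) : ℝ :=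
  Real.smoothTransition (N * (x i - c i) + 1)

/-- A smooth approximation from above of the indicator of `{x | ∀ u, ∃ s, c (u, s) ≤ x (u, s)}`,
which sharpens as `N → ∞`. -/
def smoothMinMaxIndicator (c : κ × σ → ℝ) (N : ℕ) (x : κ × σ → ℝ) : ℝ :=
  everyRowSucceeds (softThreshold c N x)

lemma softThreshold_mem_Icc (c : ι → ℝ) (N : ℕ) (x : ι → ℝ) (i : ι) :
    softThreshold c N x i ∈ Set.Icc 0 1 :=
  ⟨Real.smoothTransition.nonneg _, Real.smoothTransition.le_one _⟩

lemma softThreshold_le_smoothTransition_add (c : ι → ℝ) (N : ℕ) (x : ι → ℝ) (i : ι) {r : ℝ}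
    (hr : 0 ≤ r) :
    softThreshold c N x i ≤ Real.smoothTransition (N * (x i + r - c i) + 1) :=
  Real.smoothTransition.monotone (by gcongr; exact le_add_of_nonneg_right hr)

lemma softThreshold_add_smul_single [DecidableEq ι] (c : ι → ℝ) (N : ℕ) (x : ι → ℝ) (i : ι)
    (r : ℝ) :
    softThreshold c N (x + r • Pi.single i (1 : ℝ)) = Function.update (softThreshold c N x) i
      (Real.smoothTransition (N * (x i + r - c i) + 1)) := by
  ext j
  rcases eq_or_ne j i with rfl | hj
  · simp [softThreshold]
  · simp [softThreshold, hj]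

variable (c : κ × σ → ℝ) (N : ℕ)

lemma smoothMinMaxIndicator_mem_Icc (x : κ × σ → ℝ) :
    smoothMinMaxIndicator c N x ∈ Set.Icc 0 1 :=
  everyRowSucceeds_mem_Icc (softThreshold_mem_Icc c N x)

lemma hasBoundedDerivs_smoothMinMaxIndicator (k : ℕ) :
    HasBoundedDerivs k (smoothMinMaxIndicator c N) := by
  have hcoord (i : κ × σ) : HasBoundedDerivs k fun x : κ × σ → ℝ =>
      Real.smoothTransition (N * (x i - c i) + 1) := by
    have hcomp := (hasBoundedDerivs_smoothTransition k).comp_continuousLinearMap_add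
      ((N : ℝ) • ContinuousLinearMap.proj (R := ℝ) (φ := fun _ : κ × σ => ℝ) i) (1 - N * c i)
    convert hcomp using 3 with x
    simp only [smul_apply, ContinuousLinearMap.proj_apply, smul_eq_mul]
    ring
  exact .prod univ fun u => .sub (.const 1) (.prod univ fun s => .sub (.const 1) (hcoord (u, s)))

lemma smoothMinMaxIndicator_eq_one {x : κ × σ → ℝ} (hx : ∀ u, ∃ s, c (u, s) ≤ x (u, s)) :
    smoothMinMaxIndicator c N x = 1 :=
  everyRowSucceeds_eq_one fun u => (hx u).imp fun _ hs =>
    Real.smoothTransition.one_of_one_le <|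
      le_add_of_nonneg_left (mul_nonneg N.cast_nonneg (sub_nonneg.2 hs))

lemma eventually_smoothMinMaxIndicator_eq_zero {x : κ × σ → ℝ}
    (hx : ∃ u, ∀ s, x (u, s) < c (u, s)) : ∀ᶠ N in atTop, smoothMinMaxIndicator c N x = 0 := by
  obtain ⟨u, hu⟩ := hx
  have hlarge (s : σ) : ∀ᶠ N : ℕ in atTop, 1 ≤ N * (c (u, s) - x (u, s)) :=
    (tendsto_natCast_atTop_atTop.atTop_mul_const (sub_pos.2 (hu s))).eventually_ge_atTop 1
  filter_upwards [eventually_all.2 hlarge] with N hN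
  refine everyRowSucceeds_eq_zero ⟨u, fun s => Real.smoothTransition.zero_of_nonpos ?_⟩
  linarith [hN s]

lemma tendsto_smoothMinMaxIndicator (x : κ × σ → ℝ) :
    Tendsto (fun N => smoothMinMaxIndicator c N x) atTop
      (nhds (Set.indicator {x | ∀ u, ∃ s, c (u, s) ≤ x (u, s)} 1 x)) := by
  by_cases hx : ∀ u, ∃ s, c (u, s) ≤ x (u, s)
  · rw [Set.indicator_of_mem (Set.mem_ofPred.2 hx)]
    exact tendsto_const_nhds.congr fun N => (smoothMinMaxIndicator_eq_one c N hx).symm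
  · rw [Set.indicator_of_notMem (Set.notMem_ofPred_iff.2 hx)]
    push Not at hx
    exact tendsto_const_nhds.congr'
      ((eventually_smoothMinMaxIndicator_eq_zero c hx).mono fun N hN => hN.symm)

lemma tendsto_integral_smoothMinMaxIndicator {Ω : Type*} [MeasurableSpace Ω] (μ : Measure Ω)
    [IsFiniteMeasure μ] {X : Ω → κ × σ → ℝ} (hX : Measurable X) :
    Tendsto (fun N => ∫ ω, smoothMinMaxIndicator c N (X ω) ∂μ) atTop
      (nhds (μ.real {ω | ∀ u, ∃ s, c (u, s) ≤ X ω (u, s)})) := by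
  have hevent : MeasurableSet {ω | ∀ u, ∃ s, c (u, s) ≤ X ω (u, s)} :=
    hX (isClosed_forall_exists_le c).measurableSet
  rw [← integral_indicator_one hevent]
  refine tendsto_integral_of_dominated_convergence 1 (fun N => ?_) (integrable_const 1)
    (fun N => ae_of_all _ fun ω => ?_) (ae_of_all _ fun ω => tendsto_smoothMinMaxIndicator c (X ω))
  · exact ((hasBoundedDerivs_smoothMinMaxIndicator c N 0).contDiff.continuous.measurable.comp
      hX).aestronglyMeasurable
  · obtain ⟨h0, h1⟩ := smoothMinMaxIndicator_mem_Icc c N (X ω)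
    simpa [abs_of_nonneg h0] using h1

variable [DecidableEq κ] [DecidableEq σ]

lemma fderiv_fderiv_smoothMinMaxIndicator_nonneg {u v : κ} (huv : u ≠ v) (s t : σ)
    (x : κ × σ → ℝ) :
    0 ≤ fderiv ℝ (fderiv ℝ (smoothMinMaxIndicator c N)) x (Pi.single (u, s) 1)
      (Pi.single (v, t) 1) := by
  refine fderiv_fderiv_apply_nonneg (hasBoundedDerivs_smoothMinMaxIndicator c N 2).contDiff
    (fun x r q hr hq => ?_) x
  have hvt : (x + r • Pi.single (u, s) 1 : κ × σ → ℝ) (v, t) = x (v, t) := by simp [huv.symm]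
  simp only [smoothMinMaxIndicator, softThreshold_add_smul_single, hvt]
  exact everyRowSucceeds_update_add_le (softThreshold_mem_Icc c N x) huv
    (softThreshold_le_smoothTransition_add c N x _ hr)
    (softThreshold_le_smoothTransition_add c N x _ hq)

lemma fderiv_fderiv_smoothMinMaxIndicator_nonpos (u : κ) {s t : σ} (hst : s ≠ t)
    (x : κ × σ → ℝ) :
    fderiv ℝ (fderiv ℝ (smoothMinMaxIndicator c N)) x (Pi.single (u, s) 1)
      (Pi.single (u, t) 1) ≤ 0 := by
  have hneg := fderiv_fderiv_apply_nonneg (v := Pi.single (u, s) 1) (w := Pi.single (u, t) 1)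
    (hasBoundedDerivs_smoothMinMaxIndicator c N 2).contDiff.neg (fun x r q hr hq => ?_) x
  · have hD : fderiv ℝ (fun y => -smoothMinMaxIndicator c N y)
        = fun y => -fderiv ℝ (smoothMinMaxIndicator c N) y := funext fun y => fderiv_fun_neg
    rw [hD, fderiv_fun_neg] at hneg
    exact neg_nonneg.1 hneg
  have hut : (x + r • Pi.single (u, s) 1 : κ × σ → ℝ) (u, t) = x (u, t) := by simp [hst.symm]
  simp only [smoothMinMaxIndicator, softThreshold_add_smul_single, hut]
  linarith [everyRowSucceeds_update_update_add_le (softThreshold_mem_Icc c N x) u hst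
    (softThreshold_le_smoothTransition_add c N x _ hr)
    (softThreshold_le_smoothTransition_add c N x _ hq)]

end SmoothMinMaxIndicator

section Gordon

variable {E F κ σ : Type*} [NormedAddCommGroup E] [InnerProductSpace ℝ E] [FiniteDimensional ℝ E]
  [MeasurableSpace E] [BorelSpace E] [NormedAddCommGroup F] [InnerProductSpace ℝ F]
  [FiniteDimensional ℝ F] [MeasurableSpace F] [BorelSpace F] [Finite κ] [Finite σ]

theorem stdGaussian_real_forall_exists_le (c : κ × σ → ℝ) {a : κ × σ → E} {b : κ × σ → F}
    (hnorm : ∀ i, ‖a i‖ = ‖b i‖)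
    (hrow : ∀ u s t, inner ℝ (b (u, s)) (b (u, t)) ≤ inner ℝ (a (u, s)) (a (u, t)))
    (hne : ∀ u v s t, u ≠ v → inner ℝ (a (u, s)) (a (v, t)) ≤ inner ℝ (b (u, s)) (b (v, t))) :
    (ProbabilityTheory.stdGaussian E).real {x | ∀ u, ∃ s, c (u, s) ≤ inner ℝ (a (u, s)) x}
      ≤ (ProbabilityTheory.stdGaussian F).real
          {y | ∀ u, ∃ s, c (u, s) ≤ inner ℝ (b (u, s)) y} := by
  classical
  have := Fintype.ofFinite κ
  have := Fintype.ofFinite σ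
  refine le_of_tendsto_of_tendsto'
    (tendsto_integral_smoothMinMaxIndicator c _ (innerFamily a).continuous.measurable)
    (tendsto_integral_smoothMinMaxIndicator c _ (innerFamily b).continuous.measurable) fun N =>
    integral_innerFamily_le_of_fderiv_fderiv_mul_inner_le
      (hasBoundedDerivs_smoothMinMaxIndicator c N 3) fun w ⟨u, s⟩ ⟨v, t⟩ => ?_
  rcases ne_or_eq u v with huv | rfl
  · exact mul_le_mul_of_nonneg_left (hne u v s t huv)
      (fderiv_fderiv_smoothMinMaxIndicator_nonneg c N huv s t w)
  rcases ne_or_eq s t with hst | rfl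
  · exact mul_le_mul_of_nonpos_left (hrow u s t)
      (fderiv_fderiv_smoothMinMaxIndicator_nonpos c N u hst w)
  · rw [real_inner_self_eq_norm_sq, real_inner_self_eq_norm_sq, hnorm]

end Gordon

section BilinearGordon

variable {κ σ m p ι : Type*} [Finite κ] [Finite σ] [Fintype m] [Fintype p] [Fintype ι]

variable (ι) in
/-- The law of a family of independent standard Gaussian variables indexed by `ι`. -/
abbrev iidGaussian : Measure (ι → ℝ) := Measure.pi fun _ => gaussianReal 0 1

lemma stdGaussian_real_eq_iidGaussian_real (A : Set (EuclideanSpace ℝ ι)) :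
    (ProbabilityTheory.stdGaussian (EuclideanSpace ℝ ι)).real A
      = (iidGaussian ι).real (WithLp.toLp 2 ⁻¹' A) := by
  rw [← map_pi_eq_stdGaussian, measureReal_def, measureReal_def]
  exact congrArg ENNReal.toReal ((MeasurableEquiv.toLp 2 (ι → ℝ)).map_apply A)

/-- The coefficients of the bilinear process `sᵀ G u + ‖s‖ ‖u‖ g₀`, with `G` and `g₀` Gaussian. -/
def bilinearCoeff (s : EuclideanSpace ℝ m) (u : EuclideanSpace ℝ p) :
    EuclideanSpace ℝ ((m × p) ⊕ Unit) :=
  WithLp.toLp 2 (Sum.elim (fun ij => s ij.1 * u ij.2) fun _ => ‖s‖ * ‖u‖)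

/-- The coefficients of Gordon's decoupled process `‖u‖ ⟪s, g⟫ + ‖s‖ ⟪u, h⟫`, with `g` and `h`
Gaussian. -/
def decoupledCoeff (s : EuclideanSpace ℝ m) (u : EuclideanSpace ℝ p) : EuclideanSpace ℝ (m ⊕ p) :=
  WithLp.toLp 2 (Sum.elim (fun i => ‖u‖ * s i) fun j => ‖s‖ * u j)

lemma inner_bilinearCoeff_toLp (s : EuclideanSpace ℝ m) (u : EuclideanSpace ℝ p)
    (x : (m × p) ⊕ Unit → ℝ) :
    inner ℝ (bilinearCoeff s u) (WithLp.toLp 2 x)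
      = ∑ i, s i * ∑ j, x (.inl (i, j)) * u j + ‖s‖ * ‖u‖ * x (.inr ()) := by
  simp only [bilinearCoeff, PiLp.inner_apply, Fintype.sum_sum_type, Fintype.sum_prod_type,
    Sum.elim_inl, Sum.elim_inr, RCLike.inner_apply, conj_trivial, univ_unique, sum_singleton,
    PUnit.default_eq_unit, mul_sum]
  congr 1
  · exact sum_congr rfl fun i _ => sum_congr rfl fun j _ => by ring
  · ring

lemma inner_decoupledCoeff_toLp (s : EuclideanSpace ℝ m) (u : EuclideanSpace ℝ p)
    (y : m ⊕ p → ℝ) :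
    inner ℝ (decoupledCoeff s u) (WithLp.toLp 2 y)
      = ∑ i, s i * (‖u‖ * y (.inl i)) + ‖s‖ * ∑ j, u j * y (.inr j) := by
  simp only [decoupledCoeff, PiLp.inner_apply, Fintype.sum_sum_type, Sum.elim_inl, Sum.elim_inr,
    RCLike.inner_apply, conj_trivial, mul_sum]
  congr! 2
  all_goals ring

lemma inner_bilinearCoeff (s t : EuclideanSpace ℝ m) (u v : EuclideanSpace ℝ p) :
    inner ℝ (bilinearCoeff s u) (bilinearCoeff t v)
      = inner ℝ s t * inner ℝ u v + ‖s‖ * ‖t‖ * (‖u‖ * ‖v‖) := by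
  rw [bilinearCoeff.eq_def t v, inner_bilinearCoeff_toLp, PiLp.inner_apply, PiLp.inner_apply,
    sum_mul_sum]
  simp only [Sum.elim_inl, Sum.elim_inr, RCLike.inner_apply, conj_trivial, mul_sum]
  congr 1
  · exact sum_congr rfl fun i _ => sum_congr rfl fun j _ => by ring
  · ring

lemma inner_decoupledCoeff (s t : EuclideanSpace ℝ m) (u v : EuclideanSpace ℝ p) :
    inner ℝ (decoupledCoeff s u) (decoupledCoeff t v)
      = inner ℝ s t * (‖u‖ * ‖v‖) + ‖s‖ * ‖t‖ * inner ℝ u v := by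
  rw [decoupledCoeff.eq_def t v, inner_decoupledCoeff_toLp]
  simp only [Sum.elim_inl, Sum.elim_inr, PiLp.inner_apply, RCLike.inner_apply, conj_trivial,
    sum_mul, mul_sum]
  congr! 2
  all_goals ring

lemma inner_bilinearCoeff_sub_inner_decoupledCoeff (s t : EuclideanSpace ℝ m)
    (u v : EuclideanSpace ℝ p) :
    inner ℝ (bilinearCoeff s u) (bilinearCoeff t v)
        - inner ℝ (decoupledCoeff s u) (decoupledCoeff t v)
      = (‖s‖ * ‖t‖ - inner ℝ s t) * (‖u‖ * ‖v‖ - inner ℝ u v) := by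
  rw [inner_bilinearCoeff, inner_decoupledCoeff]
  ring

lemma norm_decoupledCoeff (s : EuclideanSpace ℝ m) (u : EuclideanSpace ℝ p) :
    ‖decoupledCoeff s u‖ = ‖bilinearCoeff s u‖ := by
  have hsub := inner_bilinearCoeff_sub_inner_decoupledCoeff s s u u
  rw [real_inner_self_eq_norm_mul_norm u, sub_self, mul_zero, sub_eq_zero,
    real_inner_self_eq_norm_sq, real_inner_self_eq_norm_sq] at hsub
  exact ((sq_eq_sq₀ (norm_nonneg _) (norm_nonneg _)).1 hsub).symm

theorem iidGaussian_real_decoupled_le_bilinear (U : κ → EuclideanSpace ℝ p)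
    (S : σ → EuclideanSpace ℝ m) (c : κ × σ → ℝ) :
    (iidGaussian (m ⊕ p)).real {y | ∀ u, ∃ s, c (u, s) ≤
        ∑ i, S s i * (‖U u‖ * y (.inl i)) + ‖S s‖ * ∑ j, U u j * y (.inr j)}
      ≤ (iidGaussian ((m × p) ⊕ Unit)).real {x | ∀ u, ∃ s, c (u, s) ≤
        ∑ i, S s i * ∑ j, x (.inl (i, j)) * U u j + ‖S s‖ * ‖U u‖ * x (.inr ())} := by
  classical
  have hgordon := stdGaussian_real_forall_exists_le c
    (a := fun us : κ × σ => decoupledCoeff (S us.2) (U us.1))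
    (b := fun us => bilinearCoeff (S us.2) (U us.1))
    (fun _ => norm_decoupledCoeff _ _)
    (fun u s t => ?_) (fun u v s t _ => ?_)
  · rw [stdGaussian_real_eq_iidGaussian_real, stdGaussian_real_eq_iidGaussian_real] at hgordon
    simpa only [Set.preimage_ofPred_eq, inner_decoupledCoeff_toLp, inner_bilinearCoeff_toLp]
      using hgordon
  · rw [← sub_nonpos, inner_bilinearCoeff_sub_inner_decoupledCoeff,
      real_inner_self_eq_norm_mul_norm (U u), sub_self, mul_zero]
  · rw [← sub_nonneg, inner_bilinearCoeff_sub_inner_decoupledCoeff]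
    exact mul_nonneg (sub_nonneg.2 (real_inner_le_norm _ _)) (sub_nonneg.2 (real_inner_le_norm _ _))

/-- The vector in `{-1, 1}ᵐ` with a given pattern of signs. -/
def signVector (s : m → ℤˣ) : EuclideanSpace ℝ m := WithLp.toLp 2 fun i => ((s i : ℤ) : ℝ)

lemma norm_signVector (s : m → ℤˣ) : ‖signVector s‖ = √(Fintype.card m) := by
  have hsq (i : m) : ((s i : ℤ) : ℝ) ^ 2 = 1 := by
    rcases Int.units_eq_one_or (s i) with h | h <;> simp [h]
  simp [EuclideanSpace.norm_eq, signVector, hsq]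

lemma signVector_mul_le_abs {m : Type*} (s : m → ℤˣ) (i : m) (r : ℝ) :
    signVector s i * r ≤ |r| := by
  rcases Int.units_eq_one_or (s i) with h | h <;> simp [signVector, h, le_abs_self, neg_le_abs]

lemma exists_signVector_mul_eq_abs {m : Type*} (r : m → ℝ) :
    ∃ s, ∀ i, signVector s i * r i = |r i| := by
  refine ⟨fun i => if 0 ≤ r i then 1 else -1, fun i => ?_⟩
  dsimp only [signVector]
  split_ifs with h
  · simp [abs_of_nonneg h]
  · simp [abs_of_neg (not_le.1 h)]

lemma le_sum_abs_add_iff_exists_signVector {c t : ℝ} {r : m → ℝ} :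
    c ≤ ∑ i, |r i| + t ↔ ∃ s : m → ℤˣ, c ≤ ∑ i, signVector s i * r i + t := by
  refine ⟨fun h => ?_, fun ⟨s, hs⟩ => hs.trans ?_⟩
  · obtain ⟨s, hs⟩ := exists_signVector_mul_eq_abs r
    exact ⟨s, by simpa only [hs] using h⟩
  · gcongr with i
    exact signVector_mul_le_abs s i (r i)

theorem iidGaussian_real_decoupled_sum_abs_le (U : κ → EuclideanSpace ℝ p) (β c : κ → ℝ) :
    (iidGaussian (m ⊕ p)).real {y | ∀ u, c u ≤
        ∑ i, |‖U u‖ * y (.inl i) + β u| + √(Fintype.card m) * ∑ j, U u j * y (.inr j)}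
      ≤ (iidGaussian ((m × p) ⊕ Unit)).real {x | ∀ u, c u ≤
        ∑ i, |∑ j, x (.inl (i, j)) * U u j + β u|
          + √(Fintype.card m) * ‖U u‖ * x (.inr ())} := by
  classical
  have hgordon := iidGaussian_real_decoupled_le_bilinear U (signVector (m := m))
    fun us => c us.1 - ∑ i, signVector us.2 i * β us.1
  have hthreshold (s : m → ℤˣ) (r : m → ℝ) (b q t : ℝ) :
      q - ∑ i, signVector s i * b ≤ ∑ i, signVector s i * r i + t
        ↔ q ≤ ∑ i, signVector s i * (r i + b) + t := by
    rw [sub_le_iff_le_add, add_right_comm, ← sum_add_distrib]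
    simp only [mul_add]
  simpa only [hthreshold, norm_signVector, ← le_sum_abs_add_iff_exists_signVector] using hgordon

end BilinearGordon

section ProductLaws

lemma measureReal_preimage_le_of_measurePreserving {Ω Ω' : Type*} [MeasurableSpace Ω]
    [MeasurableSpace Ω'] {μ : Measure Ω} {ν : Measure Ω'} [IsFiniteMeasure ν] {g : Ω → Ω'}
    (hg : MeasurePreserving g μ ν) (s : Set Ω') : μ.real (g ⁻¹' s) ≤ ν.real s := by
  refine ENNReal.toReal_mono (measure_ne_top _ _) ?_
  rw [← hg.map_eq]
  exact Measure.le_map_apply hg.aemeasurable s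

variable {α κ : Type*} [Fintype α] [Fintype κ]

lemma measurePreserving_pi_comp {X : κ → Type*} [∀ k, MeasurableSpace (X k)]
    (ν : ∀ k, Measure (X k)) [∀ k, IsProbabilityMeasure (ν k)] {e : α → κ}
    (he : Function.Injective e) :
    MeasurePreserving (fun (x : ∀ k, X k) a => x (e a)) (Measure.pi ν)
      (Measure.pi fun a => ν (e a)) := by
  have hind := (iIndepFun_pi (μ := ν) fun k => aemeasurable_id).precomp he
  refine ⟨by fun_prop, (hind.map_fun_eq_pi_map fun a => ?_).trans ?_⟩
  · exact (measurable_pi_apply (e a)).aemeasurable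
  · congr 1
    ext1 a
    exact (measurePreserving_eval ν (e a)).map_eq

variable {E : Type*} [MeasurableSpace E] {ν : Measure E} [IsProbabilityMeasure ν] {f : E → ℝ}

lemma pi_real_le_abs_sum_sub_integral_le (hf : MemLp f 2 ν) {c : ℝ} (hc : 0 < c) :
    (Measure.pi fun _ : α => ν).real
        {x | c ≤ |∑ a, f (x a) - Fintype.card α * ∫ t, f t ∂ν|}
      ≤ Fintype.card α * Var[f; ν] / c ^ 2 := by
  have hcoord (a : α) : MemLp (fun x : α → E => f (x a)) 2 (Measure.pi fun _ => ν) :=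
    hf.comp_measurePreserving (measurePreserving_eval (fun _ : α => ν) a)
  have hmean : ∫ x, (∑ a, fun x : α → E => f (x a)) x ∂(Measure.pi fun _ => ν)
      = Fintype.card α * ∫ t, f t ∂ν := by
    simp only [Finset.sum_apply]
    rw [integral_finsetSum _ fun a _ => (hcoord a).integrable one_le_two]
    simp_rw [integral_comp_eval (μ := fun _ : α => ν) hf.1]
    simp
  have hcheb := meas_ge_le_variance_div_sq (memLp_finsetSum' univ fun a _ => hcoord a) hc
  rw [hmean, variance_sum_pi fun _ => hf] at hcheb
  simp only [Finset.sum_apply, sum_const, card_univ, nsmul_eq_mul] at hcheb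
  exact ENNReal.toReal_le_of_le_ofReal
    (div_nonneg (mul_nonneg (Nat.cast_nonneg _) (variance_nonneg _ _)) (sq_nonneg c)) hcheb

lemma pi_real_le_abs_sum_comp_sub_integral_le {e : α → κ} (he : Function.Injective e)
    (hf : MemLp f 2 ν) {c : ℝ} (hc : 0 < c) :
    (Measure.pi fun _ : κ => ν).real
        {x | c ≤ |∑ a, f (x (e a)) - Fintype.card α * ∫ t, f t ∂ν|}
      ≤ Fintype.card α * Var[f; ν] / c ^ 2 :=
  (measureReal_preimage_le_of_measurePreserving (measurePreserving_pi_comp (fun _ => ν) he) _).trans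
    (pi_real_le_abs_sum_sub_integral_le hf hc)

end ProductLaws

section GaussianMoments

lemma integral_abs_gaussianReal : ∫ t, |t| ∂(gaussianReal 0 1) = √(2 / Real.pi) := by
  have hdensity (x : ℝ) : gaussianPDFReal 0 1 x • |x|
      = (√(2 * Real.pi))⁻¹ * (|x| ^ (1 : ℝ) * Real.exp (-(1 / 2) * |x| ^ (2 : ℝ))) := by
    simp only [gaussianPDFReal, smul_eq_mul, Real.rpow_one, Real.rpow_two, sq_abs,
      NNReal.coe_one, mul_one, sub_zero]
    ring_nf
  have hpow : (1 / 2 : ℝ) ^ (-(1 + 1) / 2 : ℝ) = 2 := by norm_num [Real.rpow_neg_one]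
  have hGamma : Real.Gamma ((1 + 1) / 2) = 1 := by norm_num
  rw [integral_gaussianReal_eq_integral_smul one_ne_zero, integral_congr_ae (ae_of_all _ hdensity),
    integral_comp_abs
      (f := fun y => (√(2 * Real.pi))⁻¹ * (y ^ (1 : ℝ) * Real.exp (-(1 / 2) * y ^ (2 : ℝ)))),
    integral_const_mul,
    integral_rpow_mul_exp_neg_mul_rpow two_pos (by norm_num) (by norm_num), hpow, hGamma,
    Real.sqrt_mul zero_le_two, Real.sqrt_div zero_le_two]
  field_simp
  exact (Real.sq_sqrt two_pos.le).symm

lemma integral_gaussianReal_of_odd {f : ℝ → ℝ} (hf : f.Odd) :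
    ∫ t, f t ∂(gaussianReal 0 1) = 0 := by
  have hneg : MeasurePreserving (fun x => -x) (gaussianReal 0 1) (gaussianReal 0 1) :=
    ⟨measurable_neg, by rw [gaussianReal_map_neg, neg_zero]⟩
  have hsymm := hneg.integral_comp (MeasurableEquiv.neg ℝ).measurableEmbedding f
  have hodd : (fun t => f (-t)) = fun t => -f t := funext hf
  rw [hodd, integral_neg] at hsymm
  linarith

lemma integral_sq_gaussianReal : ∫ t, t ^ 2 ∂(gaussianReal 0 1) = 1 := by
  simpa [variance_eq_sub (memLp_id_gaussianReal 2)] using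
    variance_id_gaussianReal (μ := 0) (v := 1)

lemma memLp_sq_gaussianReal : MemLp (fun x : ℝ => x ^ 2) 2 (gaussianReal 0 1) := by
  have hdiv : (4 : ENNReal) / 2 = 2 := by
    rw [eq_comm, ENNReal.eq_div_iff two_ne_zero ENNReal.ofNat_ne_top]
    norm_num
  simpa [hdiv] using (memLp_id_gaussianReal (μ := 0) (v := 1) 4).norm_rpow_div 2

lemma measurable_sign : Measurable Real.sign := by
  unfold Real.sign
  exact Measurable.ite measurableSet_Iio measurable_const
    (Measurable.ite measurableSet_Ioi measurable_const measurable_const)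

lemma abs_sign_le_one (x : ℝ) : |Real.sign x| ≤ 1 := by
  rcases Real.sign_apply_eq x with h | h | h <;> simp [h]

lemma abs_add_mul_sign_le_abs_add (x b : ℝ) : |x| + b * Real.sign x ≤ |x + b| := by
  rcases lt_trichotomy x 0 with h | rfl | h
  · rw [Real.sign_of_neg h, abs_of_neg h]
    linarith [neg_abs_le (x + b)]
  · simp
  · rw [Real.sign_of_pos h, abs_of_pos h]
    linarith [le_abs_self (x + b)]

lemma memLp_sign (μ : Measure ℝ) [IsFiniteMeasure μ] (q : ENNReal) : MemLp Real.sign q μ :=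
  MemLp.of_bound measurable_sign.aestronglyMeasurable 1 (ae_of_all _ abs_sign_le_one)

lemma variance_sign_le_one (μ : Measure ℝ) [IsProbabilityMeasure μ] : Var[Real.sign; μ] ≤ 1 := by
  simpa using variance_le_sq_of_bounded
    (ae_of_all μ fun x => Set.mem_Icc.2 (abs_le.1 (abs_sign_le_one x))) measurable_sign.aemeasurable

lemma variance_abs_gaussianReal_le_one : Var[fun x => |x|; gaussianReal 0 1] ≤ 1 := by
  refine (variance_le_expectation_sq continuous_abs.aestronglyMeasurable).trans_eq ?_
  simp [integral_sq_gaussianReal]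

lemma sqrt_two_div_pi_le_one : √(2 / Real.pi) ≤ 1 := by
  rw [Real.sqrt_le_one, div_le_one Real.pi_pos]
  exact Real.two_le_pi

end GaussianMoments

section Typicality

lemma abs_mul_le_of_abs_le_one {a b c : ℝ} (ha : |a| ≤ 1) (hb : |b| ≤ c) : |a * b| ≤ c := by
  rw [abs_mul]
  exact (mul_le_of_le_one_left (abs_nonneg b) ha).trans hb

variable {m p : Type*} [Fintype m] [Fintype p] {ε : ℝ} {y : m ⊕ p → ℝ}

/-- The event that the empirical averages which control the decoupled process
`∑ i, |‖u‖ g i + β| + √n ⟪u, h⟫` are within `ε` of their means, where `g` and `h` are the two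
blocks of the sample `y`. -/
structure IsTypical (ε : ℝ) (y : m ⊕ p → ℝ) : Prop where
  abs_sum_abs_sub_lt :
    |∑ i, |y (.inl i)| - Fintype.card m * √(2 / Real.pi)| < Fintype.card m * ε
  abs_sum_sign_lt : |∑ i, Real.sign (y (.inl i))| < Fintype.card m * ε
  abs_sum_lt : |∑ i, y (.inl i)| < Fintype.card m * ε
  abs_sum_sq_sub_lt : |∑ j, y (.inr j) ^ 2 - Fintype.card p| < Fintype.card m * ε ^ 2

namespace IsTypical

lemma le_sum_abs_add (hy : IsTypical ε y) {β : ℝ} (hβ : |β| ≤ 1) :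
    Fintype.card m * (√(2 / Real.pi) - 2 * ε) ≤ ∑ i, |y (.inl i) + β| := by
  have hsum := Finset.sum_le_sum fun i (_ : i ∈ univ) =>
    abs_add_mul_sign_le_abs_add (y (.inl i)) β
  rw [sum_add_distrib, ← mul_sum] at hsum
  have hsign := abs_le.1 (abs_mul_le_of_abs_le_one hβ hy.abs_sum_sign_lt.le)
  linarith [(abs_lt.1 hy.abs_sum_abs_sub_lt).1, hsign.1]

lemma le_sum_abs_mul_add (hy : IsTypical ε y) {r β : ℝ} (hr : |r| ≤ 1) (hβ : |β| = 1) :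
    Fintype.card m * (1 - ε) ≤ ∑ i, |r * y (.inl i) + β| := by
  calc Fintype.card m * (1 - ε)
      = |Fintype.card m * β| - Fintype.card m * ε := by
        rw [abs_mul, Nat.abs_cast, hβ]
        ring
    _ ≤ |Fintype.card m * β| - |r * ∑ i, y (.inl i)| := by
        gcongr
        exact abs_mul_le_of_abs_le_one hr hy.abs_sum_lt.le
    _ ≤ |r * ∑ i, y (.inl i) + Fintype.card m * β| := by
        rw [add_comm]
        simpa using abs_sub_abs_le_abs_sub (Fintype.card m * β) (-(r * ∑ i, y (.inl i)))
    _ = |∑ i, (r * y (.inl i) + β)| := by simp [sum_add_distrib, mul_sum]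
    _ ≤ ∑ i, |r * y (.inl i) + β| := abs_sum_le_sum_abs _ _

lemma le_sum_abs_norm_mul_add (hy : IsTypical ε y) (hε : 0 ≤ ε) {w : EuclideanSpace ℝ p × ℝ}
    (hw : ‖w‖ = 1) :
    Fintype.card m * (√(2 / Real.pi) - 2 * ε) ≤ ∑ i, |‖w.1‖ * y (.inl i) + w.2| := by
  have hu : ‖w.1‖ ≤ 1 := hw ▸ norm_fst_le w
  have hβ : |w.2| ≤ 1 := hw ▸ norm_snd_le w
  rw [Prod.norm_def, Real.norm_eq_abs] at hw
  rcases max_choice ‖w.1‖ |w.2| with hmax | hmax <;> rw [hmax] at hw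
  · simpa [hw] using hy.le_sum_abs_add hβ
  · refine le_trans ?_ (hy.le_sum_abs_mul_add (by rwa [abs_norm]) hw)
    refine mul_le_mul_of_nonneg_left ?_ (Nat.cast_nonneg _)
    linarith [sqrt_two_div_pi_le_one]

lemma neg_le_sqrt_card_mul_sum (hy : IsTypical ε y) (hε : 0 ≤ ε) {u : EuclideanSpace ℝ p}
    (hu : ‖u‖ ≤ 1) :
    -(√(Fintype.card m * Fintype.card p) + Fintype.card m * ε)
      ≤ √(Fintype.card m) * ∑ j, u j * y (.inr j) := by
  set n : ℝ := (Fintype.card m : ℝ)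
  set d : ℝ := (Fintype.card p : ℝ)
  have hn : 0 ≤ n := Nat.cast_nonneg _
  have hnorm : √(∑ j, y (.inr j) ^ 2) ≤ √d + √n * ε := by
    refine Real.sqrt_le_iff.2 ⟨by positivity, ?_⟩
    have hcross : 0 ≤ √d * (√n * ε) := by positivity
    have hd : √d ^ 2 = d := Real.sq_sqrt (Nat.cast_nonneg _)
    have hsq := (abs_lt.1 hy.abs_sum_sq_sub_lt).2
    rw [add_sq, mul_pow, hd, Real.sq_sqrt hn]
    linarith
  have hcauchy : -(√d + √n * ε) ≤ ∑ j, u j * y (.inr j) := by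
    have hcs := sum_mul_sq_le_sq_mul_sq univ u fun j => y (.inr j)
    rw [← EuclideanSpace.real_norm_sq_eq, ← Real.sq_sqrt (sum_nonneg fun j _ => sq_nonneg _),
      ← mul_pow] at hcs
    refine (abs_le.1 ((abs_le_of_sq_le_sq hcs (by positivity)).trans ?_)).1
    exact (mul_le_of_le_one_left (Real.sqrt_nonneg _) hu).trans hnorm
  calc -(√(n * d) + n * ε) = √n * -(√d + √n * ε) := by
        rw [Real.sqrt_mul hn]
        linear_combination ε * Real.mul_self_sqrt hn
    _ ≤ _ := by gcongr

theorem le_decoupled (hy : IsTypical ε y) (hε : 0 ≤ ε) {w : EuclideanSpace ℝ p × ℝ}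
    (hw : ‖w‖ = 1) :
    Fintype.card m * (√(2 / Real.pi) - 3 * ε) - √(Fintype.card m * Fintype.card p)
      ≤ ∑ i, |‖w.1‖ * y (.inl i) + w.2| + √(Fintype.card m) * ∑ j, w.1 j * y (.inr j) := by
  linarith [hy.le_sum_abs_norm_mul_add hε hw,
    hy.neg_le_sqrt_card_mul_sum hε (hw ▸ norm_fst_le w : ‖w.1‖ ≤ 1)]

end IsTypical

/-- An upper bound for the probability that one of the Chebyshev estimates for an `n × d` Gaussian
sample fails at precision `ε`. -/
def failureBound (n d ε : ℝ) : ℝ :=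
  4 / (n * ε ^ 2) + d * Var[fun t => t ^ 2; gaussianReal 0 1] / (n * ε ^ 2) ^ 2

variable [Nonempty m]

lemma iidGaussian_real_card_mul_le_abs_sum_le {κ : Type*} [Fintype κ] {e : m → κ}
    (he : Function.Injective e) {f : ℝ → ℝ} (hf : MemLp f 2 (gaussianReal 0 1))
    (hvar : Var[f; gaussianReal 0 1] ≤ 1) {a : ℝ} (hmean : ∫ t, f t ∂(gaussianReal 0 1) = a)
    (hε : 0 < ε) :
    (iidGaussian κ).real
        {x | Fintype.card m * ε ≤ |∑ i, f (x (e i)) - Fintype.card m * a|}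
      ≤ 1 / (Fintype.card m * ε ^ 2) := by
  have : (0 : ℝ) < Fintype.card m := Nat.cast_pos.2 Fintype.card_pos
  subst hmean
  refine (pi_real_le_abs_sum_comp_sub_integral_le he hf (by positivity)).trans ?_
  calc Fintype.card m * Var[f; gaussianReal 0 1] / (Fintype.card m * ε) ^ 2
      ≤ Fintype.card m * 1 / (Fintype.card m * ε) ^ 2 := by gcongr
    _ = 1 / (Fintype.card m * ε ^ 2) := by field_simp

variable (m p) in
theorem iidGaussian_real_not_isTypical_le (hε : 0 < ε) :
    (iidGaussian (m ⊕ p)).real {y | ¬ IsTypical ε y}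
      ≤ 3 / (Fintype.card m * ε ^ 2) + Fintype.card p * Var[fun t => t ^ 2; gaussianReal 0 1]
        / (Fintype.card m * ε ^ 2) ^ 2 := by
  have habs := iidGaussian_real_card_mul_le_abs_sum_le (f := fun t => |t|)
    (Sum.inl_injective (α := m) (β := p)) (memLp_id_gaussianReal 2).abs
    variance_abs_gaussianReal_le_one integral_abs_gaussianReal hε
  have hsign := iidGaussian_real_card_mul_le_abs_sum_le
    (Sum.inl_injective (α := m) (β := p)) (memLp_sign _ 2) (variance_sign_le_one _)
    (integral_gaussianReal_of_odd fun _ => Real.sign_neg) hε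
  have hid := iidGaussian_real_card_mul_le_abs_sum_le (f := id)
    (Sum.inl_injective (α := m) (β := p)) (memLp_id_gaussianReal 2)
    variance_id_gaussianReal.le (integral_gaussianReal_of_odd fun _ => rfl) hε
  have hsq := pi_real_le_abs_sum_comp_sub_integral_le (Sum.inr_injective (α := m) (β := p))
    memLp_sq_gaussianReal (c := Fintype.card m * ε ^ 2) (by positivity)
  rw [integral_sq_gaussianReal] at hsq
  refine ((measureReal_mono fun y hy => ?_).trans <|
    (measureReal_union_le _ _).trans <| add_le_add habs <|
    (measureReal_union_le _ _).trans <| add_le_add hsign <|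
    (measureReal_union_le _ _).trans <| add_le_add hid hsq).trans_eq (by ring)
  by_contra hout
  simp only [Set.mem_union, Set.mem_ofPred, not_or, not_le, id, mul_zero, mul_one, sub_zero]
    at hout
  obtain ⟨habs, hsign, hid, hsq⟩ := hout
  exact hy ⟨habs, hsign, hid, hsq⟩

end Typicality

section Separability

lemma le_measureReal_forall_le_of_finset {T Ω : Type*} [TopologicalSpace T]
    [TopologicalSpace.SeparableSpace T] [MeasurableSpace Ω] {μ : Measure Ω} [IsFiniteMeasure μ]
    {F : T → Ω → ℝ} (hmeas : ∀ t, Measurable (F t)) (hcont : ∀ ω, Continuous fun t => F t ω)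
    {a c : ℝ} (h : ∀ s : Finset T, c ≤ μ.real {ω | ∀ t ∈ s, a ≤ F t ω}) :
    c ≤ μ.real {ω | ∀ t, a ≤ F t ω} := by
  classical
  obtain ⟨D, hDcount, hD⟩ := TopologicalSpace.exists_countable_dense T
  have := hDcount.to_subtype
  let S (s : Finset D) : Set Ω := {ω | ∀ t ∈ s, a ≤ F t ω}
  have hSmeas (s : Finset D) : MeasurableSet (S s) := by
    simp only [S, Set.ofPred_forall]
    exact s.measurableSet_biInter fun t _ => measurableSet_le measurable_const (hmeas t)
  have hSanti : Antitone S := fun s s' hss' ω hω t ht => hω t (hss' ht)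
  have hinter : {ω | ∀ t, a ≤ F t ω} = ⋂ s, S s := by
    refine Set.Subset.antisymm (fun ω hω => Set.mem_iInter.2 fun s t _ => hω t) fun ω hω => ?_
    have hclosed : IsClosed {t | a ≤ F t ω} := isClosed_le continuous_const (hcont ω)
    refine fun t => hclosed.closure_subset_iff.2 (fun t ht => ?_) (hD t)
    exact Set.mem_iInter.1 hω {⟨t, ht⟩} ⟨t, ht⟩ (mem_singleton_self _)
  have hlim := tendsto_measure_iInter_atTop (μ := μ) (fun s => (hSmeas s).nullMeasurableSet)
    hSanti ⟨∅, measure_ne_top _ _⟩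
  rw [hinter]
  refine ge_of_tendsto' ((ENNReal.tendsto_toReal (measure_ne_top _ _)).comp hlim) fun s => ?_
  refine (h (s.map (Function.Embedding.subtype _))).trans (measureReal_mono fun ω hω t ht => ?_)
  exact hω t (mem_map_of_mem (Function.Embedding.subtype _) ht)

end Separability

section NonAsymptotic

variable {m p : Type*} [Fintype m] [Fintype p]

lemma measurePreserving_inl_curry : MeasurePreserving
    (fun (x : (m × p) ⊕ Unit → ℝ) i j => x (.inl (i, j))) (iidGaussian ((m × p) ⊕ Unit))
    (Measure.pi fun _ : m => iidGaussian p) := by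
  have hcurry := Measure.infinitePi_map_curry fun (_ : m) (_ : p) => gaussianReal 0 1
  simp only [Measure.infinitePi_eq_pi] at hcurry
  exact MeasurePreserving.comp ⟨(MeasurableEquiv.curry m p ℝ).measurable, hcurry⟩
    (measurePreserving_pi_comp (fun _ => gaussianReal 0 1) Sum.inl_injective)

variable [Nonempty m] {ε : ℝ}

variable (m p) in
lemma iidGaussian_real_inr_le (hε : 0 < ε) :
    (iidGaussian ((m × p) ⊕ Unit)).real {x | √(Fintype.card m) * ε ≤ |x (.inr ())|}
      ≤ 1 / (Fintype.card m * ε ^ 2) := by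
  have hn : (0 : ℝ) < Fintype.card m := Nat.cast_pos.2 Fintype.card_pos
  have hsingle := iidGaussian_real_card_mul_le_abs_sum_le (f := id)
    (Sum.inr_injective (α := m × p) (β := Unit)) (memLp_id_gaussianReal 2)
    variance_id_gaussianReal.le (integral_gaussianReal_of_odd fun _ => rfl)
    (mul_pos (Real.sqrt_pos.2 hn) hε)
  simpa [mul_pow, hn.le] using hsingle

lemma one_sub_le_iidGaussian_real_decoupled {κ : Type*} {w : κ → EuclideanSpace ℝ p × ℝ}
    (hw : ∀ k, ‖w k‖ = 1) (hε : 0 < ε) :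
    1 - (3 / (Fintype.card m * ε ^ 2) + Fintype.card p * Var[fun t => t ^ 2; gaussianReal 0 1]
        / (Fintype.card m * ε ^ 2) ^ 2)
      ≤ (iidGaussian (m ⊕ p)).real {y | ∀ k,
        Fintype.card m * (√(2 / Real.pi) - 3 * ε) - √(Fintype.card m * Fintype.card p)
          ≤ ∑ i, |‖(w k).1‖ * y (.inl i) + (w k).2|
            + √(Fintype.card m) * ∑ j, (w k).1 j * y (.inr j)} := by
  refine sub_le_iff_le_add.2 <| (probReal_univ (μ := iidGaussian (m ⊕ p))).ge.trans <|
    (measureReal_mono fun y _ => ?_).trans <| (measureReal_union_le _ _).trans <|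
    add_le_add_right (iidGaussian_real_not_isTypical_le m p hε) _
  by_cases hy : IsTypical ε y
  · exact .inl fun k => hy.le_decoupled hε.le (hw k)
  · exact .inr hy

lemma iidGaussian_real_bilinear_le_add {κ : Type*} {w : κ → EuclideanSpace ℝ p × ℝ}
    (hw : ∀ k, ‖w k‖ = 1) (hε : 0 < ε) (c : ℝ) :
    (iidGaussian ((m × p) ⊕ Unit)).real {x | ∀ k, c + Fintype.card m * ε
        ≤ ∑ i, |∑ j, x (.inl (i, j)) * (w k).1 j + (w k).2|
          + √(Fintype.card m) * ‖(w k).1‖ * x (.inr ())}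
      ≤ (iidGaussian ((m × p) ⊕ Unit)).real
          {x | ∀ k, c ≤ ∑ i, |∑ j, x (.inl (i, j)) * (w k).1 j + (w k).2|}
        + 1 / (Fintype.card m * ε ^ 2) := by
  refine (measureReal_mono fun x hx => ?_).trans <| (measureReal_union_le _ _).trans <|
    add_le_add_right (iidGaussian_real_inr_le m p hε) _
  rcases le_or_gt (√(Fintype.card m) * ε) |x (.inr ())| with hlarge | hsmall
  · exact .inr hlarge
  refine .inl fun k => ?_
  have hu : |‖(w k).1‖| ≤ 1 := by
    rw [abs_norm, ← hw k]
    exact norm_fst_le (w k)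
  have hnoise : √(Fintype.card m) * ‖(w k).1‖ * x (.inr ()) ≤ Fintype.card m * ε := by
    calc √(Fintype.card m) * ‖(w k).1‖ * x (.inr ())
        ≤ √(Fintype.card m) * (√(Fintype.card m) * ε) := by
          rw [mul_assoc]
          refine mul_le_mul_of_nonneg_left ?_ (Real.sqrt_nonneg _)
          exact (abs_le.1 (abs_mul_le_of_abs_le_one hu hsmall.le)).2
      _ = Fintype.card m * ε := by rw [← mul_assoc, Real.mul_self_sqrt (Nat.cast_nonneg _)]
  linarith [hx k]

lemma one_sub_failureBound_le_iidGaussian_real {κ : Type*} [Finite κ]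
    {w : κ → EuclideanSpace ℝ p × ℝ} (hw : ∀ k, ‖w k‖ = 1) (hε : 0 < ε) :
    1 - failureBound (Fintype.card m) (Fintype.card p) ε
      ≤ (iidGaussian ((m × p) ⊕ Unit)).real {x | ∀ k,
          Fintype.card m * (√(2 / Real.pi) - 4 * ε) - √(Fintype.card m * Fintype.card p)
            ≤ ∑ i, |∑ j, x (.inl (i, j)) * (w k).1 j + (w k).2|} := by
  set c : ℝ := Fintype.card m * (√(2 / Real.pi) - 4 * ε) - √(Fintype.card m * Fintype.card p)
    with hc
  have hdecoupled := one_sub_le_iidGaussian_real_decoupled (m := m) hw hε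
  have hgordon := iidGaussian_real_decoupled_sum_abs_le (m := m) (fun k => (w k).1)
    (fun k => (w k).2) fun _ => c + Fintype.card m * ε
  have hbilinear := iidGaussian_real_bilinear_le_add (m := m) hw hε c
  have hthreshold : Fintype.card m * (√(2 / Real.pi) - 3 * ε)
      - √(Fintype.card m * Fintype.card p) = c + Fintype.card m * ε := by
    rw [hc]
    ring
  rw [hthreshold] at hdecoupled
  have hsum : failureBound (Fintype.card m) (Fintype.card p) ε = 3 / (Fintype.card m * ε ^ 2)
      + Fintype.card p * Var[fun t => t ^ 2; gaussianReal 0 1] / (Fintype.card m * ε ^ 2) ^ 2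
      + 1 / (Fintype.card m * ε ^ 2) := by
    rw [failureBound]
    ring
  linarith

theorem one_sub_failureBound_le_pi_iidGaussian_real (hε : 0 < ε) :
    1 - failureBound (Fintype.card m) (Fintype.card p) ε
      ≤ (Measure.pi fun _ : m => iidGaussian p).real
        {x | ∀ w : Metric.sphere (0 : EuclideanSpace ℝ p × ℝ) 1,
          Fintype.card m * (√(2 / Real.pi) - 4 * ε) - √(Fintype.card m * Fintype.card p)
            ≤ ∑ i, |∑ j, x i j * w.1.1 j + w.1.2|} := by
  refine le_measureReal_forall_le_of_finset (fun w => by fun_prop) (fun x => by fun_prop)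
    fun s => ?_
  have hfinite := one_sub_failureBound_le_iidGaussian_real (m := m)
    (w := fun w : s => w.1.1) (fun w => mem_sphere_zero_iff_norm.1 w.1.2) hε
  refine hfinite.trans (le_trans ?_
    (measureReal_preimage_le_of_measurePreserving measurePreserving_inl_curry _))
  exact measureReal_mono fun x hx w hw => hx ⟨w, hw⟩

theorem ofReal_one_sub_failureBound_le_measure_of_hasLaw {Ω : Type*} [MeasurableSpace Ω]
    {μ : Measure Ω} {X : Ω → m → p → ℝ} (hX : HasLaw X (Measure.pi fun _ => iidGaussian p) μ)
    (hε : 0 < ε) :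
    ENNReal.ofReal (1 - failureBound (Fintype.card m) (Fintype.card p) ε)
      ≤ μ {ω | ∀ w : Metric.sphere (0 : EuclideanSpace ℝ p × ℝ) 1,
          Fintype.card m * (√(2 / Real.pi) - 4 * ε) - √(Fintype.card m * Fintype.card p)
            ≤ ∑ i, |∑ j, X ω i j * w.1.1 j + w.1.2|} := by
  refine (ENNReal.ofReal_le_of_le_toReal
    (one_sub_failureBound_le_pi_iidGaussian_real hε)).trans_eq (hX.measure_eq ?_).symm
  simp only [Set.ofPred_forall]
  exact (isClosed_iInter fun w => isClosed_le continuous_const (by fun_prop)).measurableSet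

end NonAsymptotic

section Asymptotics

variable {ι : Type*} {l : Filter ι}

lemma tendsto_failureBound {n d : ι → ℝ} {γ : ℝ} (hn : Tendsto n l atTop)
    (hratio : Tendsto (fun k => d k / n k) l (nhds γ)) (ε : ℝ) :
    Tendsto (fun k => failureBound (n k) (d k) ε) l (nhds 0) := by
  have hinv := tendsto_inv_atTop_zero.comp hn
  have hlim := (hinv.mul_const (4 / ε ^ 2)).add
    ((hratio.mul hinv).mul_const (Var[fun t => t ^ 2; gaussianReal 0 1] / ε ^ 4))
  simp only [zero_mul, mul_zero, add_zero] at hlim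
  refine hlim.congr fun k => ?_
  simp only [failureBound, Function.comp_apply, div_eq_mul_inv, mul_inv, mul_pow]
  ring

lemma forall_of_forall_sphere {p : Type*} [Fintype p] {P : (p → ℝ) → ℝ → Prop}
    (h : ∀ w : Metric.sphere (0 : EuclideanSpace ℝ p × ℝ) 1, P w.1.1 w.1.2) {u : p → ℝ} {β : ℝ}
    (hmax : max √(∑ j, u j ^ 2) |β| = 1) : P u β :=
  h ⟨(WithLp.toLp 2 u, β), by simpa [Prod.norm_def, EuclideanSpace.norm_eq] using hmax⟩

lemma mul_sub_le_mul_sub_sqrt_mul {n d b c : ℝ} (hn : 0 < n) (hc : √(d / n) ≤ c) :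
    n * (b - c) ≤ n * b - √(n * d) := by
  have hscale : √(n * d) = n * √(d / n) := by
    rw [show n * d = n ^ 2 * (d / n) by field_simp, Real.sqrt_mul (sq_nonneg n), Real.sqrt_sq hn.le]
  rw [hscale, ← mul_sub]
  gcongr

theorem gaussian_abs_lower_bound_general {Ω : ι → Type*} [∀ k, MeasurableSpace (Ω k)]
    {μ : ∀ k, Measure (Ω k)} {γ : ℝ} {d n : ι → ℕ} (hn : Tendsto n l atTop)
    (hratio : Tendsto (fun k => (d k : ℝ) / (n k)) l (nhds γ))
    {X : ∀ k, Ω k → Fin (n k) → Fin (d k) → ℝ}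
    (hX : ∀ k, HasLaw (X k) (Measure.pi fun _ => _root_.stdGaussian (d k)) (μ k)) :
    ∀ δ > (0 : ℝ),
      Tendsto (fun k =>
          μ k {ω | ∀ (u : Fin (d k) → ℝ) (β₀ : ℝ),
            √(∑ j, u j ^ 2) ≤ 1 → |β₀| ≤ 1 → max √(∑ j, u j ^ 2) |β₀| = 1 →
            √(2 / Real.pi) - √γ - δ ≤ (1 / (n k) : ℝ) * ∑ i, |(∑ j, X k ω i j * u j) + β₀|})
        l (nhds 1) := by
  intro δ hδ
  have hfail := tendsto_failureBound (tendsto_natCast_atTop_atTop.comp hn) hratio (δ / 8)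
  have hlow := ENNReal.tendsto_ofReal (hfail.const_sub 1)
  rw [sub_zero, ENNReal.ofReal_one] at hlow
  replace hX : ∀ k, HasLaw (X k) (Measure.pi fun _ => iidGaussian (Fin (d k))) (μ k) := hX
  have hprob (k : ι) : IsProbabilityMeasure (μ k) := (hX k).isProbabilityMeasure
  refine tendsto_of_tendsto_of_tendsto_of_le_of_le' hlow tendsto_const_nhds ?_
    (.of_forall fun k => prob_le_one)
  filter_upwards [hn.eventually_gt_atTop 0,
    hratio.sqrt.eventually_le_const (lt_add_of_pos_right √γ (half_pos hδ))] with k hk hsqrt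
  have : Nonempty (Fin (n k)) := ⟨0, hk⟩
  have hbound := ofReal_one_sub_failureBound_le_measure_of_hasLaw (hX k)
    (show 0 < δ / 8 by positivity)
  simp only [Fintype.card_fin] at hbound
  refine hbound.trans (measure_mono fun ω hω u β _ _ hmax => ?_)
  rw [one_div, le_inv_mul_iff₀ (Nat.cast_pos.2 hk)]
  calc _ = n k * (√(2 / Real.pi) - 4 * (δ / 8) - (√γ + δ / 2)) := by ring
    _ ≤ n k * (√(2 / Real.pi) - 4 * (δ / 8)) - √(n k * d k) :=
        mul_sub_le_mul_sub_sqrt_mul (Nat.cast_pos.2 hk) hsqrt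
    _ ≤ _ := forall_of_forall_sphere (P := fun u β => _ ≤ ∑ i, |∑ j, X k ω i j * u j + β|) hω hmax

end Asymptotics

/-- Lemma 18 of the paper.  Let `{X_i}_{i=1}^n` be i.i.d. `N(0, I_d)` vectors.
As `d, n → ∞` with `d/n → γ ∈ [0, ∞)`, for every `δ > 0` the probability that
`(1/n) ∑_i |X_iᵀu + β₀| ≥ √(2/π) − √γ − δ` simultaneously for all `(u, β₀)` with `‖u‖₂ ≤ 1`,
`|β₀| ≤ 1` and `max{‖u‖₂, |β₀|} = 1` converges to one; i.e. the liminf of the constrained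
infimum is at least `√(2/π) − √γ` in probability. -/
theorem gaussian_abs_lower_bound
    {Ω : Type*} [MeasurableSpace Ω] (μ : Measure Ω) [IsProbabilityMeasure μ]
    (γ : ℝ) (hγ : 0 ≤ γ)
    (d n : ℕ → ℕ) (hd : Tendsto d atTop atTop) (hn : Tendsto n atTop atTop)
    (hratio : Tendsto (fun k => (d k : ℝ) / (n k)) atTop (nhds γ))
    (X : ∀ k, Ω → Fin (n k) → Fin (d k) → ℝ)
    (hXmeas : ∀ k, Measurable (X k))
    -- the rows X_1, …, X_n are i.i.d. N(0, I_d)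
    (hXlaw : ∀ k, μ.map (X k) = Measure.pi fun _ : Fin (n k) => stdGaussian (d k)) :
    ∀ δ > (0 : ℝ),
      Tendsto (fun k =>
          μ {ω | ∀ (u : Fin (d k) → ℝ) (β₀ : ℝ),
            Real.sqrt (∑ j, u j ^ 2) ≤ 1 → |β₀| ≤ 1 →
            max (Real.sqrt (∑ j, u j ^ 2)) |β₀| = 1 →
            Real.sqrt (2 / Real.pi) - Real.sqrt γ - δ ≤
              (1 / (n k) : ℝ) * ∑ i, |(∑ j, X k ω i j * u j) + β₀|})
        atTop (nhds 1) :=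
  gaussian_abs_lower_bound_general hn hratio fun k => ⟨(hXmeas k).aemeasurable, hXlaw k⟩

end
end
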